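/- Let M be an even nondegenerate lattice of signature (t₊, t₋) and let L be an even unimodular lattice of signature (l₊, l₋). If l₊ − t₊ > 0, l₋ − t₋ > 0, and l₊ + l₋ − 2t₊ − 2t₋ ≥ 2, then there exists a primitive embedding of M into L. -/

import Mathlib

open Matrix

/-- The number of positive eigenvalues of an integer matrix, viewed as a real
symmetric matrix (0 if the real matrix is not Hermitian). -/
noncomputable def sigPlus {n : ℕ} (G : Matrix (Fin n) (Fin n) ℤ) : ℕ :=
  if h : (G.map ((↑·) : ℤ → ℝ)).IsHermitian then
    Nat.card {i : Fin n // 0 < h.eigenvalues i}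
  else 0

/-- The number of negative eigenvalues of an integer matrix, viewed as a real
symmetric matrix (0 if the real matrix is not Hermitian). -/
noncomputable def sigMinus {n : ℕ} (G : Matrix (Fin n) (Fin n) ℤ) : ℕ :=
  if h : (G.map ((↑·) : ℤ → ℝ)).IsHermitian then
    Nat.card {i : Fin n // h.eigenvalues i < 0}
  else 0

/-- An embedding of the lattice `(ℤ^m, M)` into the lattice `(ℤ^n, G)`:
an injective ℤ-linear map respecting the bilinear forms. -/
def IsLatticeEmbedding {m n : ℕ} (M : Matrix (Fin m) (Fin m) ℤ)
    (G : Matrix (Fin n) (Fin n) ℤ) (T : Matrix (Fin n) (Fin m) ℤ) : Prop :=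
  Function.Injective T.mulVec ∧
    ∀ x y : Fin m → ℤ, T.mulVec x ⬝ᵥ G.mulVec (T.mulVec y) = x ⬝ᵥ M.mulVec y

/-- A primitive embedding: an embedding whose cokernel `ℤ^n / T(ℤ^m)` is
torsion-free, i.e. if a nonzero multiple of `v` lies in the image then so does `v`. -/
def IsPrimitiveLatticeEmbedding {m n : ℕ} (M : Matrix (Fin m) (Fin m) ℤ)
    (G : Matrix (Fin n) (Fin n) ℤ) (T : Matrix (Fin n) (Fin m) ℤ) : Prop :=
  IsLatticeEmbedding M G T ∧
    ∀ (v : Fin n → ℤ) (k : ℤ), k ≠ 0 → (∃ x, T.mulVec x = k • v) → ∃ x, T.mulVec x = v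

set_option linter.all false

/-! ## Inertia -/

lemma qf_equiv_of_congr {𝕜 : Type*} [Field 𝕜] {ι : Type*} [Fintype ι] [DecidableEq ι]
    (d d' : ι → 𝕜) (P : Matrix ι ι 𝕜) (hP : IsUnit P.det)
    (h : Pᵀ * diagonal d * P = diagonal d') :
    (QuadraticMap.weightedSumSquares 𝕜 d').Equivalent (QuadraticMap.weightedSumSquares 𝕜 d) := by
  have hPu : IsUnit P := (Matrix.isUnit_iff_isUnit_det P).2 hP
  refine ⟨⟨Matrix.toLinearEquiv' P hPu.invertible, fun x => ?_⟩⟩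
  have key : ∀ (e : ι → 𝕜) (y : ι → 𝕜),
      QuadraticMap.weightedSumSquares 𝕜 e y = y ⬝ᵥ (diagonal e *ᵥ y) := by
    intro e y
    simp only [QuadraticMap.weightedSumSquares_apply, dotProduct, mulVec_diagonal, smul_eq_mul]
    exact Finset.sum_congr rfl fun i _ => by ring
  rw [key, key, ← h]
  change (P *ᵥ x) ⬝ᵥ _ *ᵥ (P *ᵥ x) = _
  rw [← mulVec_mulVec, ← mulVec_mulVec, dotProduct_mulVec x, vecMul_transpose]

lemma spectral_congr {n : ℕ} (A : Matrix (Fin n) (Fin n) ℝ) (hA : A.IsHermitian) :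
    ∃ P : Matrix (Fin n) (Fin n) ℝ, IsUnit P.det ∧ Pᵀ * diagonal hA.eigenvalues * P = A := by
  have h := hA.spectral_theorem
  have hu := hA.eigenvectorUnitary.2
  refine ⟨(star (hA.eigenvectorUnitary : Matrix (Fin n) (Fin n) ℝ)), ?_, ?_⟩
  · rw [Matrix.mem_unitaryGroup_iff] at hu
    have := congrArg Matrix.det hu
    rw [det_mul, det_one] at this
    exact IsUnit.of_mul_eq_one_right _ this
  · conv_rhs => rw [h]
    rw [Unitary.conjStarAlgAut_apply]
    congr 1

lemma sig_of_diag {n : ℕ} (G : Matrix (Fin n) (Fin n) ℤ) (hG : G.IsSymm)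
    (P : Matrix (Fin n) (Fin n) ℚ) (hP : P.det ≠ 0) (d : Fin n → ℚ)
    (h : Pᵀ * G.map (fun z : ℤ => (z : ℚ)) * P = diagonal d) :
    sigPlus G = Fintype.card {i // 0 < d i} ∧ sigMinus G = Fintype.card {i // d i < 0} := by
  have hH : (G.map ((↑·) : ℤ → ℝ)).IsHermitian := by
    ext i j
    simp [conjTranspose_apply, hG.apply i j]
  obtain ⟨Q, hQ, hQA⟩ := spectral_congr _ hH
  let R : Matrix (Fin n) (Fin n) ℝ := P.map (fun q : ℚ => (q : ℝ))
  have hR : IsUnit R.det := by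
    have : R.det = ((P.det : ℚ) : ℝ) := (RingHom.map_det (Rat.castHom ℝ) P).symm
    rw [this, isUnit_iff_ne_zero]
    exact_mod_cast hP
  have hRA : Rᵀ * (G.map ((↑·) : ℤ → ℝ)) * R = diagonal (fun i => (d i : ℝ)) := by
    have h0 := congrArg (fun X => (Rat.castHom ℝ).mapMatrix X) h
    simp only [map_mul] at h0
    have e1 : (Rat.castHom ℝ).mapMatrix Pᵀ = Rᵀ := rfl
    have e2 : (Rat.castHom ℝ).mapMatrix P = R := rfl
    have e3 : (Rat.castHom ℝ).mapMatrix (G.map (fun z : ℤ => (z : ℚ))) = G.map ((↑·) : ℤ → ℝ) := by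
      ext i j; simp
    have e4 : (Rat.castHom ℝ).mapMatrix (diagonal d) = diagonal (fun i => (d i : ℝ)) := by
      ext i j
      simp only [RingHom.mapMatrix_apply, Matrix.map_apply, diagonal_apply]
      split_ifs <;> simp
    rwa [e1, e2, e3, e4] at h0
  have heq := qf_equiv_of_congr hH.eigenvalues (fun i => (d i : ℝ)) (Q * R)
    (by rw [det_mul]; exact hQ.mul hR) (by
      rw [← hRA, transpose_mul]
      have : Rᵀ * (Qᵀ * diagonal hH.eigenvalues * Q) * R = Rᵀ * (G.map ((↑·) : ℤ → ℝ)) * R := by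
        rw [hQA]
      rw [← this]
      simp only [Matrix.mul_assoc])
  have h1 := heq.sigPos_eq
  have h2 := heq.sigNeg_eq
  rw [QuadraticForm.sigPos_weightedSumSquares, QuadraticForm.sigPos_weightedSumSquares] at h1
  rw [QuadraticForm.sigNeg_weightedSumSquares, QuadraticForm.sigNeg_weightedSumSquares] at h2
  simp only [sigPlus, sigMinus, dif_pos hH]
  rw [← Nat.card_eq_fintype_card, ← Nat.card_eq_fintype_card]
  constructor
  · have h3 : Nat.card {i // 0 < d i} = {i | 0 < (d i : ℝ)}.ncard := by
      rw [← Nat.card_coe_set_eq]; simp [Fintype.card_subtype]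
    rw [h3, h1, ← Nat.card_coe_set_eq]; rfl
  · have h3 : Nat.card {i // d i < 0} = {i | (d i : ℝ) < 0}.ncard := by
      rw [← Nat.card_coe_set_eq]; simp [Fintype.card_subtype]
    rw [h3, h2, ← Nat.card_coe_set_eq]; rfl

lemma exists_diag {ι : Type*} [Fintype ι] [DecidableEq ι] (A : Matrix ι ι ℚ) (hA : A.IsSymm) :
    ∃ (P : Matrix ι ι ℚ) (d : ι → ℚ), P.det ≠ 0 ∧ Pᵀ * A * P = diagonal d := by
  have hs : (Matrix.toBilin' A).IsSymm := by
    rw [Matrix.isSymm_toBilin'_iff_isSymm]; exact hA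
  have : Invertible (2 : ℚ) := invertibleOfNonzero two_ne_zero
  obtain ⟨v, hv⟩ := LinearMap.BilinForm.exists_orthogonal_basis
    (LinearMap.BilinForm.isSymm_iff.1 hs)
  let e : Fin (Module.finrank ℚ (ι → ℚ)) ≃ ι := (Fintype.equivFinOfCardEq (by simp)).symm
  let w := v.reindex e
  refine ⟨Matrix.of fun i j => w j i, fun i => Matrix.toBilin' A (w i) (w i), ?_, ?_⟩
  · have : (Matrix.of fun i j => w j i) = (Pi.basisFun ℚ ι).toMatrix w := by
      ext i j; simp [Module.Basis.toMatrix_apply]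
    rw [this]
    have h2 := Module.Basis.invertibleToMatrix (Pi.basisFun ℚ ι) w
    exact (Matrix.isUnit_det_of_invertible _).ne_zero
  · ext i j
    have h1 : ((Matrix.of fun i j => w j i)ᵀ * A * (Matrix.of fun i j => w j i)) i j
        = Matrix.toBilin' A (w i) (w j) := by
      rw [Matrix.toBilin'_apply', Matrix.mul_assoc]
      simp only [mul_apply, transpose_apply, dotProduct, mulVec, of_apply]
    rw [h1, diagonal_apply]
    split_ifs with hij
    · rw [hij]
    · have := hv (i := e.symm i) (j := e.symm j) (by simpa using hij)
      simpa [w] using this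

/-! ## Grothendieck–Witt group of diagonal rational forms -/

lemma perm_of_map_eq {ι κ α : Type*} [Fintype ι] [Fintype κ] [DecidableEq α]
    (a : ι → α) (b : κ → α) (h : Finset.univ.val.map a = Finset.univ.val.map b) :
    ∃ e : ι ≃ κ, ∀ i, b (e i) = a i := by
  have hc : ∀ x, Fintype.card {i // a i = x} = Fintype.card {i // b i = x} := by
    intro x
    have := congrArg (Multiset.count x) h
    rw [Multiset.count_map, Multiset.count_map] at this
    rw [Fintype.card_subtype, Fintype.card_subtype]
    simp only [Finset.card_def, Finset.filter_val]
    simpa [eq_comm] using this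
  let e : ι ≃ κ := (Equiv.sigmaFiberEquiv a).symm.trans
    ((Equiv.sigmaCongrRight fun x => Fintype.equivOfCardEq (hc x)).trans (Equiv.sigmaFiberEquiv b))
  refine ⟨e, fun i => ?_⟩
  exact ((Fintype.equivOfCardEq (hc (a i))) ⟨i, rfl⟩).2

/-- Two multisets of nonzero rationals define isometric diagonal forms. -/
def DI (s t : Multiset ℚˣ) : Prop :=
  ∃ (n : ℕ) (a b : Fin n → ℚˣ), Finset.univ.val.map a = s ∧ Finset.univ.val.map b = t ∧
    ∃ P : Matrix (Fin n) (Fin n) ℚ, ∀ j k, ∑ i, (a i : ℚ) * P i j * P i k = if j = k then (b j : ℚ) else 0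

lemma DI.of {ι : Type*} [Fintype ι] [DecidableEq ι] (a b : ι → ℚˣ) (P : Matrix ι ι ℚ)
    (h : ∀ j k, ∑ i, (a i : ℚ) * P i j * P i k = if j = k then (b j : ℚ) else 0) :
    DI (Finset.univ.val.map a) (Finset.univ.val.map b) := by
  let e := Fintype.equivFin ι
  have key : ∀ c : ι → ℚˣ, Finset.univ.val.map (c ∘ e.symm) = Finset.univ.val.map c := by
    intro c
    rw [← Multiset.map_map, Multiset.map_univ_val_equiv]
  refine ⟨_, a ∘ e.symm, b ∘ e.symm, key a, key b, P.submatrix e.symm e.symm, fun j k => ?_⟩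
  have := h (e.symm j) (e.symm k)
  simp only [EmbeddingLike.apply_eq_iff_eq] at this
  simp only [Function.comp, submatrix_apply]
  rw [← this]
  exact Equiv.sum_comp e.symm (fun i => (a i : ℚ) * P i (e.symm j) * P i (e.symm k))

lemma DI.spec {s t : Multiset ℚˣ} (hst : DI s t) {ι κ : Type*} [Fintype ι] [Fintype κ]
    [DecidableEq ι] [DecidableEq κ]
    (a : ι → ℚˣ) (b : κ → ℚˣ) (ha : Finset.univ.val.map a = s) (hb : Finset.univ.val.map b = t) :
    Nonempty (ι ≃ κ) ∧ ∃ P : Matrix ι κ ℚ,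
      ∀ j k, ∑ i, (a i : ℚ) * P i j * P i k = if j = k then (b j : ℚ) else 0 := by
  obtain ⟨n, a', b', ha', hb', P, h⟩ := hst
  obtain ⟨e, he⟩ := perm_of_map_eq a a' (ha.trans ha'.symm)
  obtain ⟨f, hf⟩ := perm_of_map_eq b b' (hb.trans hb'.symm)
  refine ⟨⟨e.trans f.symm⟩, P.submatrix e f, fun j k => ?_⟩
  have := h (f j) (f k)
  simp only [EmbeddingLike.apply_eq_iff_eq, hf] at this
  rw [← this, ← Equiv.sum_comp e]
  simp only [submatrix_apply, he]

lemma DI.refl (s : Multiset ℚˣ) : DI s s := by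
  classical
  have h := DI.of (fun x : s => (x : ℚˣ)) (fun x : s => (x : ℚˣ)) 1 (by
    intro j k
    simp only [one_apply, mul_ite, mul_one, mul_zero]
    rw [Finset.sum_ite_eq' Finset.univ k]
    simp [eq_comm]
    split_ifs with h
    · rw [h]
    · rfl)
  have h2 : Finset.univ.val.map (fun x : s => (x : ℚˣ)) = s := Multiset.map_univ_coe s
  rwa [h2] at h

lemma congr_iff_mat {ι κ : Type*} [Fintype ι] [DecidableEq ι] [DecidableEq κ]
    (a : ι → ℚ) (b : κ → ℚ) (P : Matrix ι κ ℚ) :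
    (∀ j k, ∑ i, a i * P i j * P i k = if j = k then b j else 0) ↔
      Pᵀ * diagonal a * P = diagonal b := by
  constructor
  · intro h
    ext j k
    rw [diagonal_apply, ← h j k, mul_apply]
    exact Finset.sum_congr rfl fun i _ => by rw [mul_diagonal, transpose_apply]; ring
  · intro h j k
    rw [← diagonal_apply, ← h, mul_apply]
    exact Finset.sum_congr rfl fun i _ => by rw [mul_diagonal, transpose_apply]; ring

lemma det_ne_of_congr {ι : Type*} [Fintype ι] [DecidableEq ι]
    (A B : Matrix ι ι ℚ) (hB : B.det ≠ 0) (P : Matrix ι ι ℚ) (h : Pᵀ * A * P = B) :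
    P.det ≠ 0 := by
  intro h0
  apply hB
  rw [← h, det_mul, h0, mul_zero]

lemma det_diag_ne {ι : Type*} [Fintype ι] [DecidableEq ι] (a : ι → ℚ) (ha : ∀ i, a i ≠ 0) :
    (diagonal a).det ≠ 0 := by
  rw [det_diagonal]; exact Finset.prod_ne_zero_iff.2 fun i _ => ha i

lemma DI.symm {s t : Multiset ℚˣ} (h : DI s t) : DI t s := by
  obtain ⟨n, a, b, ha, hb, P, h⟩ := h
  rw [← ha, ← hb]
  have hm := (congr_iff_mat (fun i => (a i : ℚ)) (fun i => (b i : ℚ)) P).1 h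
  have hd := det_ne_of_congr _ _ (det_diag_ne _ fun i => (b i).ne_zero) P hm
  have hu : IsUnit P.det := isUnit_iff_ne_zero.2 hd
  refine DI.of b a P⁻¹ ((congr_iff_mat (fun i => (b i : ℚ)) (fun i => (a i : ℚ)) P⁻¹).2 ?_)
  rw [← hm]
  have h1 : P * P⁻¹ = 1 := mul_nonsing_inv _ hu
  have h2 : P⁻¹ᵀ * Pᵀ = 1 := by rw [← transpose_mul, h1, transpose_one]
  calc P⁻¹ᵀ * (Pᵀ * diagonal (fun i => (a i : ℚ)) * P) * P⁻¹
      = (P⁻¹ᵀ * Pᵀ) * diagonal (fun i => (a i : ℚ)) * (P * P⁻¹) := by simp only [Matrix.mul_assoc]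
    _ = _ := by rw [h1, h2, Matrix.one_mul, Matrix.mul_one]

lemma DI.trans {s t u : Multiset ℚˣ} (h : DI s t) (h' : DI t u) : DI s u := by
  obtain ⟨n, a, b, ha, hb, P, h⟩ := h
  obtain ⟨n', b', c', hb', hc', P', h'⟩ := h'
  obtain ⟨e, he⟩ := perm_of_map_eq b b' (hb.trans hb'.symm)
  have h'' : ∀ j k, ∑ i, (b i : ℚ) * (P'.submatrix e e) i j * (P'.submatrix e e) i k
      = if j = k then (c' (e j) : ℚ) else 0 := by
    intro j k
    have := h' (e j) (e k)
    simp only [EmbeddingLike.apply_eq_iff_eq] at this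
    rw [← this, ← Equiv.sum_comp e]
    simp only [submatrix_apply, he]
  rw [congr_iff_mat (fun i => (a i : ℚ)) (fun i => (b i : ℚ))] at h
  rw [congr_iff_mat (fun i => (b i : ℚ)) (fun i => (c' (e i) : ℚ))] at h''
  have := DI.of a (c' ∘ e) (P * P'.submatrix e e)
    ((congr_iff_mat (fun i => (a i : ℚ)) (fun i => (c' (e i) : ℚ)) _).2 (by
      rw [← h'', ← h, transpose_mul]; simp only [Matrix.mul_assoc]))
  rwa [ha, ← Multiset.map_map, Multiset.map_univ_val_equiv, hc'] at this

lemma DI.add {s t s' t' : Multiset ℚˣ} (h : DI s t) (h' : DI s' t') : DI (s + s') (t + t') := by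
  obtain ⟨n, a, b, ha, hb, P, h⟩ := h
  obtain ⟨n', a', b', ha', hb', P', h'⟩ := h'
  have key : ∀ (f : Fin n → ℚˣ) (g : Fin n' → ℚˣ),
      Finset.univ.val.map (Sum.elim f g) = Finset.univ.val.map f + Finset.univ.val.map g := by
    intro f g
    rw [← Finset.univ_disjSum_univ, Finset.val_disjSum, Multiset.disjSum, Multiset.map_add,
      Multiset.map_map, Multiset.map_map]
    rfl
  rw [← ha, ← hb, ← ha', ← hb', ← key, ← key]
  refine DI.of _ _ (fromBlocks P 0 0 P') ?_
  rintro (j | j) (k | k) <;> simp [h, h', Fintype.sum_sum_type]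

/-- Witt cancellation, diagonal version. -/
lemma witt_cancel {ι : Type*} [Fintype ι] [DecidableEq ι] (c : ℚ) (a b : ι → ℚ)
    (P : Matrix (Option ι) (Option ι) ℚ)
    (h : ∀ j k : Option ι, ∑ i : Option ι, (i.elim c a) * P i j * P i k
      = if j = k then (j.elim c b) else 0) :
    ∃ Q : Matrix ι ι ℚ, ∀ j k, ∑ i, a i * Q i j * Q i k = if j = k then b j else 0 := by
  set α := P none none with hα
  have h1 := h none none
  have h2 : ∀ k, c * α * P none (some k) + ∑ i, a i * P (some i) none * P (some i) (some k) = 0 := by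
    intro k
    have := h none (some k)
    rw [Fintype.sum_option] at this
    simpa using this
  have h3 : ∀ j k, c * P none (some j) * P none (some k)
      + ∑ i, a i * P (some i) (some j) * P (some i) (some k) = if j = k then b j else 0 := by
    intro j k
    have := h (some j) (some k)
    rw [Fintype.sum_option] at this
    simpa using this
  rw [Fintype.sum_option] at h1
  simp only [Option.elim_none, Option.elim_some, if_true] at h1
  rw [← hα] at h1
  obtain ⟨κ, hκ⟩ : ∃ κ : ℚ, -2 * κ * α + κ ^ 2 * (1 - α ^ 2) = 1 := by
    by_cases h : α = 1
    · exact ⟨-1 / 2, by rw [h]; norm_num⟩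
    · refine ⟨1 / (1 - α), ?_⟩
      have : (1 - α) ≠ 0 := sub_ne_zero.2 (Ne.symm h)
      field_simp
      ring
  refine ⟨Matrix.of fun i j => P (some i) (some j) + κ * P (some i) none * P none (some j), ?_⟩
  intro j k
  simp only [of_apply]
  have e : ∀ i, a i * (P (some i) (some j) + κ * P (some i) none * P none (some j))
      * (P (some i) (some k) + κ * P (some i) none * P none (some k))
      = a i * P (some i) (some j) * P (some i) (some k)
        + κ * P none (some j) * (a i * P (some i) none * P (some i) (some k))
        + κ * P none (some k) * (a i * P (some i) none * P (some i) (some j))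
        + κ ^ 2 * P none (some j) * P none (some k) * (a i * P (some i) none * P (some i) none) := by
    intro i; ring
  simp only [e, Finset.sum_add_distrib, ← Finset.mul_sum]
  have := h3 j k
  have hj := h2 j
  have hk := h2 k
  rw [← this]
  linear_combination κ * P none (some j) * hk + κ * P none (some k) * hj +
    κ ^ 2 * P none (some j) * P none (some k) * h1 + c * P none (some j) * P none (some k) * hκ

lemma DI.cancel_one {s t : Multiset ℚˣ} (c : ℚˣ) (h : DI (c ::ₘ s) (c ::ₘ t)) : DI s t := by
  classical
  have fam : ∀ (κ : Type) [Fintype κ] (f : κ → ℚˣ),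
      Finset.univ.val.map (fun o : Option κ => o.elim c f) = c ::ₘ Finset.univ.val.map f := by
    intro κ _ f
    rw [univ_option]
    simp [Finset.insertNone]
    rfl
  have hs : Finset.univ.val.map (fun x : s => (x : ℚˣ)) = s := Multiset.map_univ_coe s
  have ht : Finset.univ.val.map (fun x : t => (x : ℚˣ)) = t := Multiset.map_univ_coe t
  obtain ⟨⟨e⟩, -⟩ := h.spec (fun o : Option s => o.elim c (fun x => (x : ℚˣ)))
    (fun o : Option t => o.elim c (fun x => (x : ℚˣ))) (by rw [fam, hs]) (by rw [fam, ht])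
  have hcard : Fintype.card s = Fintype.card t := by
    have := Fintype.card_congr e
    simpa using this
  let e' : s ≃ t := Fintype.equivOfCardEq hcard
  have ht' : Finset.univ.val.map (fun x : s => ((e' x : t) : ℚˣ)) = t := by
    have h3 : Finset.univ.val.map ((fun x : t => (x : ℚˣ)) ∘ e') = t := by
      rw [← Multiset.map_map, Multiset.map_univ_val_equiv, ht]
    exact h3
  obtain ⟨-, P, hP⟩ := h.spec (fun o : Option s => o.elim c (fun x => (x : ℚˣ)))
    (fun o : Option s => o.elim c (fun x => ((e' x : t) : ℚˣ))) (by rw [fam, hs]) (by rw [fam, ht'])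
  have el : ∀ (o : Option s) (f : s → ℚˣ), ((o.elim c f : ℚˣ) : ℚ) = o.elim (c : ℚ) (fun i => (f i : ℚ)) := by
    intro o f; cases o <;> rfl
  simp only [el] at hP
  obtain ⟨Q, hQ⟩ := witt_cancel (c : ℚ) _ _ P hP
  have := DI.of _ _ Q hQ
  rwa [hs, ht'] at this

lemma DI.cancel {s t : Multiset ℚˣ} (u : Multiset ℚˣ) (h : DI (u + s) (u + t)) : DI s t := by
  induction u using Multiset.induction_on with
  | empty => simpa using h
  | cons a u ih =>
    rw [Multiset.cons_add, Multiset.cons_add] at h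
    exact ih (DI.cancel_one a h)

/-- The congruence of isometry. -/
def diCon : AddCon (Multiset ℚˣ) where
  r := DI
  iseqv := ⟨DI.refl, DI.symm, DI.trans⟩
  add' := DI.add

instance : IsCancelAdd diCon.Quotient where
  add_left_cancel := by
    intro a b c
    induction a using AddCon.induction_on with | _ a
    induction b using AddCon.induction_on with | _ b
    induction c using AddCon.induction_on with | _ c
    intro h
    have h' : ((a + b : Multiset ℚˣ) : diCon.Quotient) = ((a + c : Multiset ℚˣ)) := h
    rw [AddCon.eq] at h' ⊢
    exact DI.cancel a h'
  add_right_cancel := by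
    intro a b c
    induction a using AddCon.induction_on with | _ a
    induction b using AddCon.induction_on with | _ b
    induction c using AddCon.induction_on with | _ c
    intro h
    have h' : ((b + a : Multiset ℚˣ) : diCon.Quotient) = ((c + a : Multiset ℚˣ)) := h
    rw [add_comm b a, add_comm c a] at h'
    rw [AddCon.eq] at h' ⊢
    have hres := DI.cancel a h'
    exact hres

/-- The Grothendieck-Witt group of `ℚ`. -/
abbrev GW : Type := Algebra.GrothendieckAddGroup diCon.Quotient

/-- class of a multiset -/
noncomputable def clsM : Multiset ℚˣ →+ GW :=
  (Algebra.GrothendieckAddGroup.of (M := diCon.Quotient)).comp diCon.mk'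

lemma clsM_eq_iff (s t : Multiset ℚˣ) : clsM s = clsM t ↔ DI s t := by
  unfold clsM
  rw [AddMonoidHom.comp_apply, AddMonoidHom.comp_apply,
    Algebra.GrothendieckAddGroup.of_injective.eq_iff]
  exact AddCon.eq _

/-- class of a rational number -/
noncomputable def cl (q : ℚ) : GW := if h : q ≠ 0 then clsM {Units.mk0 q h} else 0

lemma cl_sum {ι : Type*} [Fintype ι] (a : ι → ℚˣ) :
    ∑ i, cl (a i) = clsM (Finset.univ.val.map a) := by
  have : ∀ i, cl (a i) = clsM {a i} := by
    intro i
    rw [cl, dif_pos (a i).ne_zero]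
    simp
  simp only [this]
  rw [← map_sum]
  congr 1
  rw [← Multiset.sum_map_singleton (Finset.univ.val.map a), Multiset.map_map]
  rfl

lemma cl_sum_eq_iff {ι κ : Type*} [Fintype ι] [Fintype κ] [DecidableEq ι] [DecidableEq κ]
    (a : ι → ℚ) (b : κ → ℚ) (ha : ∀ i, a i ≠ 0) (hb : ∀ i, b i ≠ 0)
    (h : ∑ i, cl (a i) = ∑ i, cl (b i)) :
    Nonempty (ι ≃ κ) ∧ ∃ P : Matrix ι κ ℚ, Pᵀ * diagonal a * P = diagonal b := by
  have h1 := cl_sum (fun i => Units.mk0 (a i) (ha i))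
  have h2 := cl_sum (fun i => Units.mk0 (b i) (hb i))
  simp only [Units.val_mk0] at h1 h2
  rw [h1, h2, clsM_eq_iff] at h
  obtain ⟨e, P, hP⟩ := h.spec _ _ rfl rfl
  exact ⟨e, P, (congr_iff_mat a b P).1 hP⟩

lemma cl_sum_eq_of {ι : Type*} [Fintype ι] [DecidableEq ι]
    (a b : ι → ℚ) (ha : ∀ i, a i ≠ 0) (hb : ∀ i, b i ≠ 0)
    (P : Matrix ι ι ℚ) (h : Pᵀ * diagonal a * P = diagonal b) :
    ∑ i, cl (a i) = ∑ i, cl (b i) := by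
  have h1 := cl_sum (fun i => Units.mk0 (a i) (ha i))
  have h2 := cl_sum (fun i => Units.mk0 (b i) (hb i))
  simp only [Units.val_mk0] at h1 h2
  rw [h1, h2, clsM_eq_iff]
  exact DI.of _ _ P ((congr_iff_mat a b P).2 h)

lemma cl_mul_sq (a b : ℚ) (hb : b ≠ 0) : cl (a * b ^ 2) = cl a := by
  by_cases ha : a = 0
  · simp [ha]
  have := cl_sum_eq_of (ι := Unit) (fun _ => a) (fun _ => a * b ^ 2) (fun _ => ha)
    (fun _ => by positivity) (Matrix.of fun _ _ => b)
    (by ext i j; rw [mul_apply]; simp; ring)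
  simpa using this.symm

lemma cl_add (a b : ℚ) (ha : a ≠ 0) (hb : b ≠ 0) (hab : a + b ≠ 0) :
    cl a + cl b = cl (a + b) + cl (a * b * (a + b)) := by
  have := cl_sum_eq_of ![a, b] ![a + b, a * b * (a + b)]
    (by intro i; fin_cases i <;> simpa) (by intro i; fin_cases i <;> simp [*])
    !![1, b; 1, -a]
    (by ext i j; rw [mul_apply]; fin_cases i <;> fin_cases j <;> simp <;> ring)
  simpa [Fin.sum_univ_two] using this

lemma cl_neg (a : ℚ) (ha : a ≠ 0) : cl a + cl (-a) = cl 1 + cl (-1) := by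
  have := cl_sum_eq_of ![a, -a] ![1, -1]
    (by intro i; fin_cases i <;> simpa) (by intro i; fin_cases i <;> simp)
    !![(1 + a⁻¹) / 2, (1 - a⁻¹) / 2; (1 - a⁻¹) / 2, (1 + a⁻¹) / 2]
    (by ext i j; rw [mul_apply]; fin_cases i <;> fin_cases j <;> simp <;> field_simp <;> ring)
  simpa [Fin.sum_univ_two] using this

lemma cl_four (c : ℕ) (hc : c ≠ 0) : 4 • cl (c : ℚ) = 4 • cl 1 := by
  obtain ⟨x, y, z, w, h⟩ := Nat.sum_four_squares c
  have hq : (x : ℚ) ^ 2 + y ^ 2 + z ^ 2 + w ^ 2 = c := by exact_mod_cast h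
  have := cl_sum_eq_of (fun _ : Fin 4 => (1 : ℚ)) (fun _ : Fin 4 => (c : ℚ))
    (by simp) (by simpa using hc)
    !![(x : ℚ), -y, -z, -w; (y : ℚ), x, -w, z; (z : ℚ), w, x, -y; (w : ℚ), -z, y, x]
    (by
      rw [← hq]
      ext i j; rw [mul_apply]; fin_cases i <;> fin_cases j <;> simp [Fin.sum_univ_four] <;> ring)
  simpa using this.symm

/-! ## Lattices in rational quadratic spaces -/

/-- The integers inside `ℚ`. -/
abbrev ZZ : Subring ℚ := (Int.castRingHom ℚ).range

lemma mem_ZZ {q : ℚ} : q ∈ ZZ ↔ ∃ z : ℤ, (z : ℚ) = q := Iff.rfl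

lemma int_mem_ZZ (z : ℤ) : (z : ℚ) ∈ ZZ := ⟨z, rfl⟩

section lat
variable {V : Type*} [AddCommGroup V] [Module ℚ V] [FiniteDimensional ℚ V]
  (B : LinearMap.BilinForm ℚ V)

/-- The dual lattice. -/
abbrev dl (N : Submodule ℤ V) : Submodule ℤ V := B.dualSubmodule N

lemma mem_dl {N : Submodule ℤ V} {x : V} : x ∈ dl B N ↔ ∀ y ∈ N, B x y ∈ ZZ := by
  rw [LinearMap.BilinForm.mem_dualSubmodule]
  simp only [Submodule.mem_one]
  rfl

lemma exists_latBasis (N : Submodule ℤ V) [Submodule.IsLattice ℚ N] :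
    ∃ (n : ℕ) (b : Module.Basis (Fin n) ℚ V), N = Submodule.span ℤ (Set.range b) := by
  let b := Module.finBasis ℤ N
  refine ⟨_, b.extendOfIsLattice ℚ, ?_⟩
  have : Set.range (b.extendOfIsLattice ℚ) = N.subtype '' (Set.range b) := by
    rw [← Set.range_comp]
    congr 1
    ext i
    simp
  rw [this, ← Submodule.map_span, b.span_eq, Submodule.map_top, Submodule.range_subtype]

lemma isLattice_span {ι : Type*} [Finite ι] (b : Module.Basis ι ℚ V) :
    Submodule.IsLattice ℚ (Submodule.span ℤ (Set.range b)) where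
  fg := Submodule.fg_span (Set.finite_range b)
  span_eq_top := by
    rw [Submodule.span_span_of_tower, b.span_eq]

variable {B}

lemma dl_dl (hB : B.Nondegenerate) (hs : B.IsSymm) (N : Submodule ℤ V) [Submodule.IsLattice ℚ N] :
    dl B (dl B N) = N := by
  obtain ⟨n, b, rfl⟩ := exists_latBasis N
  exact LinearMap.BilinForm.dualSubmodule_dualSubmodule_of_basis (R := ℤ) (B := B) hB hs b

lemma dl_isLattice (hB : B.Nondegenerate) (N : Submodule ℤ V) [Submodule.IsLattice ℚ N] :
    Submodule.IsLattice ℚ (dl B N) := by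
  obtain ⟨n, b, rfl⟩ := exists_latBasis N
  rw [dl, LinearMap.BilinForm.dualSubmodule_span_of_basis B hB b]
  exact isLattice_span _

lemma dl_sup (hs : B.IsSymm) (N₁ N₂ : Submodule ℤ V) : dl B (N₁ ⊔ N₂) = dl B N₁ ⊓ dl B N₂ := by
  ext x
  rw [Submodule.mem_inf, mem_dl, mem_dl, mem_dl]
  constructor
  · intro h
    exact ⟨fun y hy => h y (Submodule.mem_sup_left hy), fun y hy => h y (Submodule.mem_sup_right hy)⟩
  · rintro ⟨h1, h2⟩ y hy
    obtain ⟨a, ha, b, hb, rfl⟩ := Submodule.mem_sup.1 hy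
    rw [map_add]
    exact add_mem (h1 a ha) (h2 b hb)

lemma dl_inf (hB : B.Nondegenerate) (hs : B.IsSymm) (N₁ N₂ : Submodule ℤ V)
    [Submodule.IsLattice ℚ N₁] [Submodule.IsLattice ℚ N₂] :
    dl B (N₁ ⊓ N₂) = dl B N₁ ⊔ dl B N₂ := by
  have h1 := dl_isLattice hB N₁
  have h2 := dl_isLattice hB N₂
  rw [← dl_dl hB hs (dl B N₁ ⊔ dl B N₂), dl_sup hs, dl_dl hB hs, dl_dl hB hs]

lemma dl_anti {N₁ N₂ : Submodule ℤ V} (h : N₁ ≤ N₂) : dl B N₂ ≤ dl B N₁ := by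
  intro x hx
  rw [mem_dl] at hx ⊢
  exact fun y hy => hx y (h hy)

variable (B)

/-- even unimodular lattice -/
structure EU (L : Submodule ℤ V) : Prop where
  lat : Submodule.IsLattice ℚ L
  self : dl B L = L
  even : ∀ x ∈ L, ∃ z : ℤ, B x x = 2 * z

variable {B}

lemma EU.int {L : Submodule ℤ V} (h : EU B L) {x y : V} (hx : x ∈ L) (hy : y ∈ L) :
    ∃ z : ℤ, (z : ℚ) = B x y := by
  rw [← h.self] at hx
  exact (mem_dl B).1 hx y hy

lemma EU.mem {L : Submodule ℤ V} (h : EU B L) {x : V} (hx : ∀ y ∈ L, ∃ z : ℤ, (z : ℚ) = B x y) :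
    x ∈ L := by
  rw [← h.self]
  exact (mem_dl B).2 hx

lemma EU.eq_of_le {L L' : Submodule ℤ V} (h : EU B L) (h' : EU B L') (hle : L ≤ L') : L = L' := by
  apply le_antisymm hle
  rw [← h.self, ← h'.self]
  exact dl_anti hle

/-- Overlattice construction. -/
lemma EU.over (hB : B.Nondegenerate) (hs : B.IsSymm) {L : Submodule ℤ V} (h : EU B L)
    (N : Submodule ℤ V) (hN : Submodule.IsLattice ℚ N)
    (hInt : N ≤ dl B N) (heven : ∀ x ∈ N, ∃ z : ℤ, B x x = 2 * z) :
    ∃ L' : Submodule ℤ V, EU B L' ∧ N ≤ L' := by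
  have hL := h.lat
  have hd := dl_isLattice hB N
  refine ⟨N ⊔ (dl B N ⊓ L), ⟨inferInstance, ?_, ?_⟩, le_sup_left⟩
  · rw [dl_sup hs, dl_inf hB hs, dl_dl hB hs, h.self, inf_comm, sup_inf_assoc_of_le _ hInt, inf_comm]
  · intro x hx
    obtain ⟨n, hn, l, hl, rfl⟩ := Submodule.mem_sup.1 hx
    obtain ⟨hl1, hl2⟩ := Submodule.mem_inf.1 hl
    obtain ⟨a, ha⟩ := heven n hn
    obtain ⟨b, hb⟩ := h.even l hl2
    obtain ⟨c, hc⟩ := mem_ZZ.1 ((mem_dl B).1 hl1 n hn)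
    refine ⟨a + b + c, ?_⟩
    have := hs.eq n l
    simp only [map_add, LinearMap.add_apply, ha, hb, this, ← hc]
    push_cast
    ring

/-- isometry -/
def IsIso (B : LinearMap.BilinForm ℚ V) (g : V →ₗ[ℚ] V) : Prop := ∀ x y, B (g x) (g y) = B x y

lemma IsIso.comp {g h : V →ₗ[ℚ] V} (hg : IsIso B g) (hh : IsIso B h) : IsIso B (g ∘ₗ h) := by
  intro x y
  rw [LinearMap.comp_apply, LinearMap.comp_apply, hg, hh]

lemma IsIso.inj (hB : B.Nondegenerate) {g : V →ₗ[ℚ] V} (hg : IsIso B g) : Function.Injective g := by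
  rw [injective_iff_map_eq_zero]
  intro x hx
  have : ∀ y, B x y = 0 := by
    intro y
    rw [← hg, hx]; simp
  exact hB.1 x this

lemma IsIso.inv (hB : B.Nondegenerate) {g : V →ₗ[ℚ] V} (hg : IsIso B g) :
    ∃ g' : V →ₗ[ℚ] V, IsIso B g' ∧ (∀ x, g' (g x) = x) ∧ (∀ x, g (g' x) = x) := by
  let e := LinearEquiv.ofInjectiveEndo g (hg.inj hB)
  have he : ∀ x, g (e.symm x) = x := fun x => e.apply_symm_apply x
  refine ⟨e.symm, fun x y => ?_, fun x => e.symm_apply_apply x, he⟩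
  rw [← hg]
  change B (g (e.symm x)) (g (e.symm y)) = _
  rw [he, he]

lemma EU.map (hB : B.Nondegenerate) {L : Submodule ℤ V} (h : EU B L) {g : V →ₗ[ℚ] V}
    (hg : IsIso B g) : EU B (L.map (g.restrictScalars ℤ)) := by
  obtain ⟨g', hg', h1, h2⟩ := hg.inv hB
  have hL := h.lat
  refine ⟨⟨(Submodule.IsLattice.fg (A := ℚ) (M := L)).map _, ?_⟩, ?_, ?_⟩
  · rw [Submodule.map_coe]
    have : (g.restrictScalars ℤ : V → V) '' (L : Set V) = g '' (L : Set V) := rfl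
    change Submodule.span ℚ (g '' (L : Set V)) = ⊤
    rw [← Submodule.map_span, Submodule.IsLattice.span_eq_top, Submodule.map_top,
      LinearMap.range_eq_top]
    exact fun x => ⟨g' x, h2 x⟩
  · ext x
    rw [mem_dl]
    constructor
    · intro hx
      refine ⟨g' x, h.mem fun y hy => ?_, h2 x⟩
      have := hx (g y) ⟨y, hy, rfl⟩
      rw [← h2 x, hg] at this
      exact this
    · rintro ⟨y, hy, rfl⟩ z ⟨w, hw, rfl⟩
      change B (g y) (g w) ∈ ZZ
      rw [hg]
      exact h.int hy hw
  · rintro x ⟨y, hy, rfl⟩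
    change ∃ z : ℤ, B (g y) (g y) = _
    rw [hg]
    exact h.even y hy

/-- there is an isometry carrying the first lattice into the second one -/
def Carries (B : LinearMap.BilinForm ℚ V) (L L' : Submodule ℤ V) : Prop :=
  ∃ g : V →ₗ[ℚ] V, IsIso B g ∧ ∀ x ∈ L, g x ∈ L'

lemma Carries.trans {L L' L'' : Submodule ℤ V} (h : Carries B L L') (h' : Carries B L' L'') :
    Carries B L L'' := by
  obtain ⟨g, hg, hL⟩ := h
  obtain ⟨g', hg', hL'⟩ := h'
  exact ⟨g' ∘ₗ g, hg'.comp hg, fun x hx => hL' _ (hL x hx)⟩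

lemma carries_map (L : Submodule ℤ V) {g : V →ₗ[ℚ] V} (hg : IsIso B g) :
    Carries B L (L.map (g.restrictScalars ℤ)) := ⟨g, hg, fun x hx => ⟨x, hx, rfl⟩⟩

lemma map_carries (hB : B.Nondegenerate) (L : Submodule ℤ V) {g : V →ₗ[ℚ] V} (hg : IsIso B g) :
    Carries B (L.map (g.restrictScalars ℤ)) L := by
  obtain ⟨g', hg', h1, h2⟩ := hg.inv hB
  refine ⟨g', hg', ?_⟩
  rintro x ⟨y, hy, rfl⟩
  change g' (g y) ∈ L
  rwa [h1]

/-- Eichler transformation -/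
noncomputable def eich (B : LinearMap.BilinForm ℚ V) (e z : V) : V →ₗ[ℚ] V :=
  LinearMap.id + (B.flip e).smulRight z - (B.flip z).smulRight e
    - (B.flip e).smulRight ((B z z / 2) • e)

lemma eich_apply (e z v : V) : eich B e z v =
    v + B v e • z - B v z • e - B v e • (B z z / 2) • e := by
  simp [eich, LinearMap.BilinForm.flip_apply]

lemma eich_iso (hs : B.IsSymm) {e z : V} (he : B e e = 0) (hz : B e z = 0) : IsIso B (eich B e z) := by
  intro x y
  have sy : ∀ a b, B a b = B b a := fun a b => by simpa using hs.eq a b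
  rw [eich_apply, eich_apply]
  simp only [map_add, map_sub, map_smul, LinearMap.add_apply, LinearMap.sub_apply,
    LinearMap.smul_apply, smul_eq_mul, he, hz, sy z e, sy e y, sy z y]
  ring

/-- hyperbolic scaling -/
noncomputable def hscale (B : LinearMap.BilinForm ℚ V) (e f : V) (r : ℚ) : V →ₗ[ℚ] V :=
  LinearMap.id + (B.flip f).smulRight ((r - 1) • e) + (B.flip e).smulRight ((r⁻¹ - 1) • f)

lemma hscale_apply (e f : V) (r : ℚ) (v : V) : hscale B e f r v =
    v + B v f • (r - 1) • e + B v e • (r⁻¹ - 1) • f := by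
  simp [hscale, LinearMap.BilinForm.flip_apply]

lemma hscale_iso (hs : B.IsSymm) {e f : V} (he : B e e = 0) (hf : B f f = 0) (hef : B e f = 1)
    {r : ℚ} (hr : r ≠ 0) : IsIso B (hscale B e f r) := by
  intro x y
  have sy : ∀ a b, B a b = B b a := fun a b => by simpa using hs.eq a b
  rw [hscale_apply, hscale_apply]
  simp only [map_add, map_sub, map_smul, LinearMap.add_apply, LinearMap.sub_apply,
    LinearMap.smul_apply, smul_eq_mul, he, hf, hef, sy f e, sy e y, sy f y]
  field_simp
  ring

end lat

section nbr
variable {V : Type*} [AddCommGroup V] [Module ℚ V] [FiniteDimensional ℚ V]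
  {B : LinearMap.BilinForm ℚ V}

lemma zsmul_q (k : ℤ) (v : V) : k • v = (k : ℚ) • v := (Int.cast_smul_eq_zsmul ℚ k v).symm

lemma qmem (L : Submodule ℤ V) (k : ℤ) {v : V} (hv : v ∈ L) : (k : ℚ) • v ∈ L := by
  rw [← zsmul_q]; exact L.smul_mem k hv

/-- Every isotropic vector of a lattice can be rescaled to a member of a hyperbolic pair. -/
lemma EU.hyp (hB : B.Nondegenerate) (hs : B.IsSymm) {L : Submodule ℤ V} (h : EU B L)
    {v : V} (hv : v ≠ 0) (hvv : B v v = 0) :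
    ∃ (r : ℚ) (f : V), r ≠ 0 ∧ r • v ∈ L ∧ f ∈ L ∧ B (r • v) f = 1 ∧ B f f = 0 := by
  have sy : ∀ a b, B a b = B b a := fun a b => by simpa using hs.eq a b
  have hL := h.lat
  -- the image of `L` under `B v`
  let φ : V →ₗ[ℤ] ℚ := (B v).restrictScalars ℤ
  have hfg : (L.map φ).FG := (Submodule.IsLattice.fg (A := ℚ) (M := L)).map _
  -- fractional ideal is principal
  obtain ⟨q, hq⟩ : ∃ q : ℚ, L.map φ = Submodule.span ℤ {q} := by
    have : (L.map φ).IsPrincipal := by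
      let I : FractionalIdeal (nonZeroDivisors ℤ) ℚ := ⟨L.map φ, FractionalIdeal.isFractional_of_fg hfg⟩
      have := FractionalIdeal.isPrincipal I
      exact this
    exact this.1
  have hq0 : q ≠ 0 := by
    rintro rfl
    apply hv
    apply hB.1
    have hz : ∀ y ∈ L, B v y = 0 := by
      intro y hy
      have : φ y ∈ L.map φ := ⟨y, hy, rfl⟩
      rw [hq, Submodule.span_zero_singleton, Submodule.mem_bot] at this
      exact this
    intro y
    have hy : y ∈ Submodule.span ℚ (L : Set V) := by
      rw [Submodule.IsLattice.span_eq_top]; trivial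
    induction hy using Submodule.span_induction with
    | mem x hx => exact hz x hx
    | zero => simp
    | add a b _ _ ha hb => rw [map_add, ha, hb, add_zero]
    | smul c a _ ha => rw [map_smul, ha, smul_zero]
  have hmem : q⁻¹ • v ∈ L := by
    apply h.mem
    intro y hy
    have : φ y ∈ L.map φ := ⟨y, hy, rfl⟩
    rw [hq, Submodule.mem_span_singleton] at this
    obtain ⟨k, hk⟩ := this
    refine ⟨k, ?_⟩
    have hk' : (k : ℚ) * q = B v y := by rw [← zsmul_eq_mul]; exact hk
    rw [map_smul, LinearMap.smul_apply, ← hk', smul_eq_mul]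
    field_simp
  obtain ⟨f0, hf0, hf1⟩ : q ∈ L.map φ := by rw [hq]; exact Submodule.mem_span_singleton_self q
  have hf1' : B v f0 = q := hf1
  obtain ⟨z, hz⟩ := h.even f0 hf0
  refine ⟨q⁻¹, f0 - (z : ℚ) • q⁻¹ • v, inv_ne_zero hq0, hmem, ?_, ?_, ?_⟩
  · exact L.sub_mem hf0 (qmem L z hmem)
  · simp [hf1', hvv, hq0]
  · simp only [map_sub, map_smul, LinearMap.sub_apply, LinearMap.smul_apply, smul_eq_mul, hvv, hz,
      sy f0 v, hf1']
    field_simp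
    ring

/-- The step: a neighbour along `x`. -/
lemma nbr_step (hB : B.Nondegenerate) (hs : B.IsSymm) {L : Submodule ℤ V} (h : EU B L)
    {e f x : V} (he : e ∈ L) (hf : f ∈ L) (hee : B e e = 0) (hff : B f f = 0) (hef : B e f = 1)
    (hxe : B x e = 0) (hxf : B x f = 0) (hxx : ∃ z : ℤ, B x x = 2 * z) :
    ∃ g : V →ₗ[ℚ] V, IsIso B g ∧ e ∈ L.map (g.restrictScalars ℤ) ∧ f ∈ L.map (g.restrictScalars ℤ) ∧
      x ∈ L.map (g.restrictScalars ℤ) ∧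
      ∀ w ∈ L, B w e = 0 → B w f = 0 → B w x ∈ ZZ → w ∈ L.map (g.restrictScalars ℤ) := by
  have sy : ∀ a b, B a b = B b a := fun a b => by simpa using hs.eq a b
  have hL := h.lat
  obtain ⟨m, hm⟩ := hxx
  -- some multiple of x lies in L
  let φ : V →ₗ[ℤ] ℚ := (B x).restrictScalars ℤ
  have hfg : (L.map φ ⊔ Submodule.span ℤ {(1 : ℚ)}).FG :=
    ((Submodule.IsLattice.fg (A := ℚ) (M := L)).map _).sup (Submodule.fg_span (Set.finite_singleton _))
  obtain ⟨q, hq⟩ : ∃ q : ℚ, L.map φ ⊔ Submodule.span ℤ {(1 : ℚ)} = Submodule.span ℤ {q} := by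
    have : (L.map φ ⊔ Submodule.span ℤ {(1 : ℚ)}).IsPrincipal := by
      let I : FractionalIdeal (nonZeroDivisors ℤ) ℚ :=
        ⟨L.map φ ⊔ Submodule.span ℤ {(1 : ℚ)}, FractionalIdeal.isFractional_of_fg hfg⟩
      have := FractionalIdeal.isPrincipal I
      exact this
    exact this.1
  obtain ⟨d, hd⟩ : ∃ d : ℤ, (d : ℚ) * q = 1 := by
    have : (1 : ℚ) ∈ L.map φ ⊔ Submodule.span ℤ {(1 : ℚ)} :=
      Submodule.mem_sup_right (Submodule.mem_span_singleton_self _)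
    rw [hq, Submodule.mem_span_singleton] at this
    obtain ⟨k, hk⟩ := this
    exact ⟨k, by rw [← zsmul_eq_mul]; exact hk⟩
  have hd0 : (d : ℚ) ≠ 0 := left_ne_zero_of_mul_eq_one hd
  have hdB : ∀ y ∈ L, ∃ k : ℤ, (k : ℚ) = d * B x y := by
    intro y hy
    have : φ y ∈ L.map φ ⊔ Submodule.span ℤ {(1 : ℚ)} := Submodule.mem_sup_left ⟨y, hy, rfl⟩
    rw [hq, Submodule.mem_span_singleton] at this
    obtain ⟨k, hk⟩ := this
    refine ⟨k, ?_⟩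
    have hk' : (k : ℚ) * q = B x y := by rw [← zsmul_eq_mul]; exact hk
    rw [← hk']; linear_combination -(k : ℚ) * hd
  have hdx : (d : ℚ) • x ∈ L := by
    apply h.mem
    intro y hy
    simpa using hdB y hy
  obtain ⟨y, β, hy, hye, hyf, hyx⟩ : ∃ (y : V) (β : ℤ), y ∈ L ∧ B y e = 0 ∧ B y f = 0 ∧
      d * ((β : ℚ) + B x y) = 1 := by
    have : q ∈ L.map φ ⊔ Submodule.span ℤ {(1 : ℚ)} := by
      rw [hq]; exact Submodule.mem_span_singleton_self q
    obtain ⟨a, ⟨l, hl, rfl⟩, b, hb, hab⟩ := Submodule.mem_sup.1 this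
    obtain ⟨β, rfl⟩ := Submodule.mem_span_singleton.1 hb
    have hab' : B x l + β = q := by rw [← hab, zsmul_eq_mul, mul_one]; rfl
    obtain ⟨a1, ha1⟩ := h.int hl he
    obtain ⟨a2, ha2⟩ := h.int hl hf
    refine ⟨l - (a2 : ℚ) • e - (a1 : ℚ) • f, β, ?_, ?_, ?_, ?_⟩
    · exact L.sub_mem (L.sub_mem hl (qmem L _ he)) (qmem L _ hf)
    · simp [hee, hef, sy f e, ha1]
    · simp [hff, hef, ha2]
    · simp only [map_sub, map_smul, hxe, hxf, smul_zero, sub_zero]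
      rw [add_comm, hab', hd]
  obtain ⟨t, ht⟩ := h.even y hy
  let g : V →ₗ[ℚ] V := eich B e (-y) ∘ₗ hscale B e f ((d : ℚ)⁻¹) ∘ₗ eich B f (-x)
  have hg : IsIso B g := by
    refine (eich_iso hs hee (by simp [sy e y, hye])).comp
      ((hscale_iso hs hee hff hef (inv_ne_zero hd0)).comp (eich_iso hs hff (by simp [sy f x, hxf])))
  have gf : g f = (d : ℚ) • (f - y - (t : ℚ) • e) := by
    simp only [g, LinearMap.comp_apply]
    rw [eich_apply f (-x)]
    simp only [map_neg, hff, hxf, sy f x, neg_zero, zero_smul, add_zero, sub_zero]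
    rw [hscale_apply]
    simp only [hff, sy f e, hef, zero_smul, one_smul, add_zero, inv_inv]
    simp only [eich_apply e (-y)]
    simp only [map_add, map_neg, map_smul, LinearMap.add_apply, LinearMap.smul_apply,
      LinearMap.neg_apply, sy f e, hef, sy f y, hyf, ht, smul_eq_mul]
    module
  have ge : g e = ((d : ℚ)⁻¹ - B x y) • e - x - ((m : ℚ) * d) • (f - y - (t : ℚ) • e) := by
    simp only [g, LinearMap.comp_apply]
    rw [eich_apply f (-x)]
    simp only [map_neg, LinearMap.neg_apply, neg_neg, hef, hxe, hm, sy e x]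
    rw [hscale_apply]
    simp only [map_add, map_sub, map_neg, map_smul, LinearMap.add_apply, LinearMap.sub_apply,
      LinearMap.smul_apply, LinearMap.neg_apply, smul_eq_mul, hff, sy f e, hef, hxe, hxf, hee, inv_inv]
    simp only [eich_apply e (-y)]
    simp only [map_add, map_sub, map_neg, map_smul, LinearMap.add_apply, LinearMap.sub_apply,
      LinearMap.smul_apply, LinearMap.neg_apply, smul_eq_mul, hff, sy f e, hef, hxe, hxf, hee,
      sy e y, sy f y, hye, hyf, ht]
    module
  have gw : ∀ w, B w e = 0 → B w f = 0 →
      g w = w + B w y • e + (B w x * d) • (f - y - (t : ℚ) • e) := by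
    intro w hwe hwf
    simp only [g, LinearMap.comp_apply]
    rw [eich_apply f (-x)]
    simp only [map_neg, LinearMap.neg_apply, neg_neg, hef, hxe, hm, sy e x, hwe, hwf]
    rw [hscale_apply]
    simp only [map_add, map_sub, map_neg, map_smul, LinearMap.add_apply, LinearMap.sub_apply,
      LinearMap.smul_apply, LinearMap.neg_apply, smul_eq_mul, hff, sy f e, hef, hxe, hxf, hee, inv_inv,
      hwe, hwf]
    simp only [eich_apply e (-y)]
    simp only [map_add, map_sub, map_neg, map_smul, LinearMap.add_apply, LinearMap.sub_apply,
      LinearMap.smul_apply, LinearMap.neg_apply, smul_eq_mul, hff, sy f e, hef, hxe, hxf, hee,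
      sy e y, sy f y, hye, hyf, ht, hwe, hwf]
    module
  have he3 : e ∈ L.map (g.restrictScalars ℤ) := by
    refine ⟨(d : ℚ) • e + ((-d * m : ℤ) : ℚ) • f + (d : ℚ) • x, ?_, ?_⟩
    · exact L.add_mem (L.add_mem (qmem L d he) (qmem L _ hf)) hdx
    · change g _ = e
      simp only [map_add, map_smul, ge, gf, gw x hxe hxf, hm]
      push_cast
      have : (d : ℚ) • ((d : ℚ)⁻¹ - B x y) • e = (1 - d * B x y) • e := by
        rw [smul_smul]; congr 1; field_simp
      rw [smul_sub, smul_sub, this]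
      module
  have hmem3 : ∀ (k : ℤ) v, v + (k : ℚ) • e ∈ L.map (g.restrictScalars ℤ) →
      v ∈ L.map (g.restrictScalars ℤ) := by
    intro k v hv
    have := Submodule.sub_mem _ hv (qmem _ k he3)
    simpa using this
  refine ⟨g, hg, he3, ?_, ?_, ?_⟩
  · apply hmem3 t
    refine ⟨(β : ℚ) • f + y, L.add_mem (qmem L _ hf) hy, ?_⟩
    change g _ = _
    rw [map_add, map_smul, gf, gw y hye hyf, ht, sy y x]
    have h1 : B x y * d = 1 - d * β := by linear_combination hyx
    rw [h1]
    module
  · apply hmem3 (-β)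
    refine ⟨(-1 : ℚ) • e + ((-m : ℤ) : ℚ) • f, L.add_mem (by simpa using he) (qmem L _ hf), ?_⟩
    change g _ = _
    rw [map_add, map_smul, map_smul, gf, ge]
    have h1 : B x y = (d : ℚ)⁻¹ - β := by field_simp; linear_combination hyx
    rw [h1]
    push_cast
    module
  · intro w hw hwe hwf hwx
    obtain ⟨k, hk⟩ := mem_ZZ.1 hwx
    obtain ⟨j, hj⟩ := h.int hw hy
    apply hmem3 j
    refine ⟨w + ((-k : ℤ) : ℚ) • f, L.add_mem hw (qmem L _ hf), ?_⟩
    change g _ = _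
    rw [map_add, map_smul, gf, gw w hwe hwf, ← hk, ← hj]
    push_cast
    module

/-- Two even unimodular lattices sharing a hyperbolic pair are isometric. -/
lemma carries_of_common (hB : B.Nondegenerate) (hs : B.IsSymm) {Λ : Submodule ℤ V} (hΛ : EU B Λ)
    {e f : V} (heΛ : e ∈ Λ) (hfΛ : f ∈ Λ) (hee : B e e = 0) (hff : B f f = 0) (hef : B e f = 1)
    (L : Submodule ℤ V) (h : EU B L) (he : e ∈ L) (hf : f ∈ L) : Carries B Λ L := by
  have sy : ∀ a b, B a b = B b a := fun a b => by simpa using hs.eq a b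
  have hlat := hΛ.lat
  have hwf : WellFoundedGT (Submodule ℤ Λ) := inferInstance
  induction hN : L.comap Λ.subtype using hwf.wf.induction generalizing L with
  | _ N ih =>
    subst hN
    by_cases hle : Λ ≤ L
    · exact ⟨LinearMap.id, fun x y => rfl, fun x hx => hle hx⟩
    obtain ⟨x0, hx0, hx0L⟩ := SetLike.not_le_iff_exists.1 hle
    obtain ⟨a1, ha1⟩ := hΛ.int hx0 heΛ
    obtain ⟨a2, ha2⟩ := hΛ.int hx0 hfΛ
    set x := x0 - (a2 : ℚ) • e - (a1 : ℚ) • f with hx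
    have hxΛ : x ∈ Λ := Λ.sub_mem (Λ.sub_mem hx0 (qmem Λ _ heΛ)) (qmem Λ _ hfΛ)
    have hxL : x ∉ L := by
      intro hxL
      apply hx0L
      have : x0 = x + (a2 : ℚ) • e + (a1 : ℚ) • f := by rw [hx]; abel
      rw [this]
      exact L.add_mem (L.add_mem hxL (qmem L _ he)) (qmem L _ hf)
    have hxe : B x e = 0 := by simp [hx, hee, hef, sy f e, ha1]
    have hxf : B x f = 0 := by simp [hx, hff, hef, ha2]
    obtain ⟨g, hg, h1, h2, h3, h4⟩ := nbr_step hB hs h he hf hee hff hef hxe hxf (hΛ.even x hxΛ)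
    refine (ih ((L.map (g.restrictScalars ℤ)).comap Λ.subtype) ?_ _ (h.map hB hg) h1 h2 rfl).trans
      (map_carries hB L hg)
    change _ < _
    refine lt_of_le_of_ne ?_ ?_
    · rintro ⟨w, hwΛ⟩ hwL
      change w ∈ L at hwL
      change w ∈ L.map (g.restrictScalars ℤ)
      obtain ⟨b1, hb1⟩ := hΛ.int hwΛ heΛ
      obtain ⟨b2, hb2⟩ := hΛ.int hwΛ hfΛ
      set w' := w - (b2 : ℚ) • e - (b1 : ℚ) • f with hw'
      have hw'Λ : w' ∈ Λ := Λ.sub_mem (Λ.sub_mem hwΛ (qmem Λ _ heΛ)) (qmem Λ _ hfΛ)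
      have hw'L : w' ∈ L := L.sub_mem (L.sub_mem hwL (qmem L _ he)) (qmem L _ hf)
      have := h4 w' hw'L (by simp [hw', hee, hef, sy f e, hb1]) (by simp [hw', hff, hef, hb2])
        (hΛ.int hw'Λ hxΛ)
      have hww : w = w' + (b2 : ℚ) • e + (b1 : ℚ) • f := by rw [hw']; abel
      rw [hww]
      exact Submodule.add_mem _ (Submodule.add_mem _ this (qmem _ _ h1)) (qmem _ _ h2)
    · intro heq
      apply hxL
      have : (⟨x, hxΛ⟩ : Λ) ∈ (L.map (g.restrictScalars ℤ)).comap Λ.subtype := h3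
      rw [← heq] at this
      exact this

/-- Even unimodular lattices in an isotropic space are isometric. -/
lemma EU.carries (hB : B.Nondegenerate) (hs : B.IsSymm) {Λ L : Submodule ℤ V} (hΛ : EU B Λ)
    (h : EU B L) {v : V} (hv : v ≠ 0) (hvv : B v v = 0) : Carries B Λ L := by
  have sy : ∀ a b, B a b = B b a := fun a b => by simpa using hs.eq a b
  obtain ⟨r, f, hr, hrL, hfL, hrf, hff⟩ := h.hyp hB hs hv hvv
  obtain ⟨r', f', hr', hrL', hfL', hrf', hff'⟩ := hΛ.hyp hB hs hv hvv
  set e := r • v with he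
  set e' := r' • v with he'
  have hee : B e e = 0 := by simp [he, hvv]
  have hee' : B e' e' = 0 := by simp [he', hvv]
  -- first rescale
  have hg1 := hscale_iso hs hee' hff' hrf' (r := r / r') (by positivity)
  set g1 := hscale B e' f' (r / r')
  have g1e : g1 e' = e := by
    rw [hscale_apply, hee', hrf', he, he']
    simp only [smul_smul]
    rw [zero_mul, zero_smul, add_zero, ← add_smul]
    congr 1
    field_simp
    ring
  set f1 := g1 f' with hf1
  have hef1 : B e f1 = 1 := by rw [← g1e, hf1, hg1, hrf']
  have hff1 : B f1 f1 = 0 := by rw [hf1, hg1, hff']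
  have hg2 := eich_iso (z := f - f1) hs hee (by rw [map_sub, hrf, hef1, sub_self])
  set g2 := eich B e (f - f1)
  have g2e : g2 e = e := by
    rw [eich_apply, hee, map_sub, hrf, hef1]; simp
  have g2f : g2 f1 = f := by
    rw [eich_apply]
    simp only [map_sub, LinearMap.sub_apply, hff, hff1, sy f1 e, hef1, sy f1 f]
    module
  have hΛ' := hΛ.map hB (hg2.comp hg1)
  refine (carries_map Λ (hg2.comp hg1)).trans
    (carries_of_common hB hs hΛ' (e := e) (f := f) ?_ ?_ hee hff hrf L h hrL hfL)
  · exact ⟨e', hrL', by change g2 (g1 e') = e; rw [g1e, g2e]⟩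
  · exact ⟨f', hfL', by change g2 (g1 f') = f; rw [← hf1, g2f]⟩

end nbr

/-! ## The norm trick -/

lemma poly_shift (f : Polynomial ℤ) (g : ℕ) : ∃ u v w : Polynomial ℤ, u = f + (g : Polynomial ℤ) * w ∧
    ∀ t : ℝ, Polynomial.aeval (t + √(g : ℝ)) f = Polynomial.aeval t u + √(g : ℝ) * Polynomial.aeval t v ∧
      Polynomial.aeval (t - √(g : ℝ)) f = Polynomial.aeval t u - √(g : ℝ) * Polynomial.aeval t v := by
  have hg : √(g : ℝ) * √(g : ℝ) = g := Real.mul_self_sqrt (by positivity)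
  induction f using Polynomial.induction_on with
  | C a => exact ⟨Polynomial.C a, 0, 0, by simp, fun t => by simp⟩
  | add p q hp hq =>
    obtain ⟨u, v, w, h, h'⟩ := hp
    obtain ⟨u2, v2, w2, h2, h2'⟩ := hq
    refine ⟨u + u2, v + v2, w + w2, by rw [h, h2]; ring, fun t => ?_⟩
    simp only [map_add, (h' t).1, (h' t).2, (h2' t).1, (h2' t).2]
    constructor <;> ring
  | monomial n a ih =>
    obtain ⟨u, v, w, h, h'⟩ := ih
    refine ⟨Polynomial.X * u + (g : Polynomial ℤ) * v, u + Polynomial.X * v, Polynomial.X * w + v, ?_, fun t => ?_⟩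
    · rw [h, pow_succ]; ring
    · rw [pow_succ, ← mul_assoc]
      simp only [map_mul, map_add, Polynomial.aeval_X, map_natCast] at h' ⊢
      rw [(h' t).1, (h' t).2]
      constructor
      · linear_combination (Polynomial.aeval t v) * hg
      · linear_combination (Polynomial.aeval t v) * hg

/-- product of all `t ± √g₁ ± … ± √gₖ` -/
noncomputable def HH : List ℕ → ℝ → ℝ
  | [], t => t
  | g :: l, t => HH l (t + √(g : ℝ)) * HH l (t - √(g : ℝ))

lemma HH_perm {l l' : List ℕ} (h : l.Perm l') : ∀ t, HH l t = HH l' t := by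
  induction h with
  | nil => intro t; rfl
  | cons x _ ih => intro t; simp only [HH, ih]
  | swap x y l =>
    intro t
    simp only [HH]
    rw [show t + √(y : ℝ) + √(x : ℝ) = t + √(x : ℝ) + √(y : ℝ) by ring,
      show t + √(y : ℝ) - √(x : ℝ) = t - √(x : ℝ) + √(y : ℝ) by ring,
      show t - √(y : ℝ) + √(x : ℝ) = t + √(x : ℝ) - √(y : ℝ) by ring,
      show t - √(y : ℝ) - √(x : ℝ) = t - √(x : ℝ) - √(y : ℝ) by ring]
    ring
  | trans _ _ h1 h2 => intro t; rw [h1, h2]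

lemma HH_poly (N : ℕ) (l : List ℕ) (hl : ∀ g ∈ l, N ∣ g) : ∃ f : Polynomial ℤ,
    (∀ t, HH l t = Polynomial.aeval t f) ∧ ∀ t : ℤ, (N : ℤ) ∣ f.eval t - t ^ (2 ^ l.length) := by
  induction l with
  | nil => exact ⟨Polynomial.X, by simp [HH], by simp⟩
  | cons g l ih =>
    obtain ⟨f, h1, h2⟩ := ih fun g' hg' => hl g' (List.mem_cons_of_mem _ hg')
    obtain ⟨u, v, w, hu, hs⟩ := poly_shift f g
    have hg : √(g : ℝ) * √(g : ℝ) = g := Real.mul_self_sqrt (by positivity)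
    refine ⟨u ^ 2 - g * v ^ 2, fun t => ?_, fun t => ?_⟩
    · simp only [HH, h1, (hs t).1, (hs t).2, map_sub, map_mul, map_pow, map_natCast]
      linear_combination -(Polynomial.aeval t v) ^ 2 * hg
    · obtain ⟨k, hk⟩ := hl g List.mem_cons_self
      obtain ⟨j, hj⟩ := h2 t
      have e : Polynomial.eval t u = Polynomial.eval t f + N * k * Polynomial.eval t w := by
        rw [hu, hk]; simp
      simp only [Polynomial.eval_sub, Polynomial.eval_pow, Polynomial.eval_mul,
        Polynomial.eval_natCast, e, List.length_cons, pow_succ, pow_mul]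
      rw [hk, show Polynomial.eval t f = t ^ 2 ^ l.length + N * j by rw [← hj]; ring]
      refine ⟨j * (2 * t ^ 2 ^ l.length + N * j) + 2 * (t ^ 2 ^ l.length + N * j) * k * Polynomial.eval t w
        + N * k ^ 2 * Polynomial.eval t w ^ 2 - k * Polynomial.eval t v ^ 2, ?_⟩
      push_cast
      ring

lemma HH_split (l : List ℕ) (g : ℕ) (hg : g ∈ l) : ∃ u v : Polynomial ℤ, ∀ t : ℝ,
    HH l t = (Polynomial.aeval t u) ^ 2 - g * (Polynomial.aeval t v) ^ 2 := by
  obtain ⟨f, h1, -⟩ := HH_poly 1 (l.erase g) (fun _ _ => one_dvd _)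
  obtain ⟨u, v, w, hu, hs⟩ := poly_shift f g
  have hg' : √(g : ℝ) * √(g : ℝ) = g := Real.mul_self_sqrt (by positivity)
  refine ⟨u, v, fun t => ?_⟩
  rw [HH_perm (List.perm_cons_erase hg)]
  simp only [HH, h1, (hs t).1, (hs t).2]
  linear_combination -(Polynomial.aeval t v) ^ 2 * hg'

lemma HH_pos (l : List ℕ) : ∀ t, (l.map fun g : ℕ => √(g : ℝ)).sum < t → 0 < HH l t := by
  induction l with
  | nil => intro t ht; simpa [HH] using ht
  | cons g l ih =>
    intro t ht
    rw [List.map_cons, List.sum_cons] at ht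
    have := Real.sqrt_nonneg (g : ℝ)
    exact mul_pos (ih _ (by linarith)) (ih _ (by linarith))

lemma HH_neg (l : List ℕ) : ∀ t, t < (l.map fun g : ℕ => √(g : ℝ)).sum →
    (∀ g ∈ l, (l.map fun g : ℕ => √(g : ℝ)).sum - 2 * √(g : ℝ) < t) → HH l t < 0 := by
  induction l with
  | nil => intro t ht _; simpa [HH] using ht
  | cons g l ih =>
    intro t ht h2
    rw [List.map_cons, List.sum_cons] at ht h2
    have := Real.sqrt_nonneg (g : ℝ)
    have h3 := h2 g List.mem_cons_self
    refine mul_neg_of_pos_of_neg (HH_pos l _ (by linarith)) (ih _ (by linarith) ?_)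
    intro g' hg'
    have := h2 g' (List.mem_cons_of_mem _ hg')
    linarith

lemma norm_trick (l : List ℕ) (hl : ∀ g ∈ l, 0 < g) (N : ℕ) (hN : 0 < N) :
    ∃ c : ℤ, 0 < c ∧ (N : ℤ) ∣ c + 1 ∧ ∀ g ∈ l, ∃ r s : ℤ, s ≠ 0 ∧ (g : ℤ) * s ^ 2 = c + r ^ 2 := by
  set l' := l.map fun g => N ^ 2 * g with hl'
  set σ := (l'.map fun g : ℕ => √(g : ℝ)).sum with hσ
  have hNr : (0 : ℝ) < N := by exact_mod_cast hN
  obtain ⟨f, hf1, hf2⟩ := HH_poly N l' (by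
    intro g hg
    obtain ⟨a, _, rfl⟩ := List.mem_map.1 hg
    exact ⟨N * a, by ring⟩)
  set k : ℤ := ⌈(σ - 1) / N⌉ - 1 with hk
  set t : ℤ := 1 + N * k with ht
  have hk1 : (k : ℝ) < (σ - 1) / N := by
    have := Int.ceil_lt_add_one ((σ - 1) / N)
    rw [hk]; push_cast; linarith
  have hk2 : (σ - 1) / N - 1 ≤ k := by
    have := Int.le_ceil ((σ - 1) / N)
    rw [hk]; push_cast; linarith
  rw [lt_div_iff₀ hNr] at hk1
  rw [sub_le_iff_le_add, div_le_iff₀ hNr] at hk2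
  have htr : (t : ℝ) = 1 + N * k := by rw [ht]; push_cast; ring
  have hneg : HH l' t < 0 := by
    apply HH_neg
    · rw [htr]; linarith
    · intro g hg
      obtain ⟨a, ha, rfl⟩ := List.mem_map.1 hg
      have h1 : (N : ℝ) ≤ √((N ^ 2 * a : ℕ) : ℝ) := by
        apply Real.le_sqrt_of_sq_le
        have : 0 < a := hl a ha
        have : (1 : ℝ) ≤ a := by exact_mod_cast this
        push_cast
        nlinarith [sq_nonneg (N : ℝ)]
      rw [htr]
      linarith
  have hev : ∀ p : Polynomial ℤ, Polynomial.aeval (t : ℝ) p = ((p.eval t : ℤ) : ℝ) := by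
    intro p
    have := Polynomial.aeval_algebraMap_apply ℝ t p
    simpa using this
  refine ⟨-f.eval t, ?_, ?_, ?_⟩
  · rw [hf1, hev] at hneg
    have : f.eval t < 0 := by exact_mod_cast hneg
    linarith
  · have h1 := hf2 t
    have h2 : (N : ℤ) ∣ t ^ 2 ^ l'.length - 1 := by
      refine dvd_trans ?_ (sub_one_dvd_pow_sub_one t _)
      exact ⟨k, by rw [ht]; ring⟩
    have := dvd_add h1 h2
    rw [show -Polynomial.eval t f + 1 = -(Polynomial.eval t f - t ^ 2 ^ l'.length + (t ^ 2 ^ l'.length - 1)) by ring]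
    exact (dvd_neg).2 this
  · intro g hg
    obtain ⟨u, v, huv⟩ := HH_split l' (N ^ 2 * g) (List.mem_map.2 ⟨g, hg, rfl⟩)
    have h := huv t
    have h0 := hneg
    rw [hf1, hev, hev, hev] at h
    rw [hf1, hev] at h0
    have h' : f.eval t = (u.eval t) ^ 2 - (N ^ 2 * g) * (v.eval t) ^ 2 := by exact_mod_cast h
    have h0' : f.eval t < 0 := by exact_mod_cast h0
    refine ⟨u.eval t, N * v.eval t, ?_, ?_⟩
    · intro hz
      have : (N : ℤ) ^ 2 * v.eval t ^ 2 = 0 := by rw [← mul_pow, hz]; ring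
      nlinarith [sq_nonneg (u.eval t)]
    · rw [h']; ring

/-! ## Sign counts, exclusion lemma, van der Blij -/

lemma sign_count_sq {ι : Type*} [Fintype ι] [DecidableEq ι] (a b : ι → ℚ) (ha : ∀ i, a i ≠ 0)
    (hb : ∀ i, b i ≠ 0) (P : Matrix ι ι ℚ) (h : Pᵀ * diagonal a * P = diagonal b) :
    Fintype.card {i // 0 < a i} = Fintype.card {i // 0 < b i} ∧
    Fintype.card {i // a i < 0} = Fintype.card {i // b i < 0} := by
  have hP := det_ne_of_congr _ _ (det_diag_ne b hb) P h
  have e := qf_equiv_of_congr a b P (isUnit_iff_ne_zero.2 hP) h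
  have e1 := e.sigPos_eq
  have e2 := e.sigNeg_eq
  rw [QuadraticForm.sigPos_weightedSumSquares, QuadraticForm.sigPos_weightedSumSquares] at e1
  rw [QuadraticForm.sigNeg_weightedSumSquares, QuadraticForm.sigNeg_weightedSumSquares] at e2
  simp only [Fintype.card_subtype] at *
  constructor
  · have := e1.symm
    simpa [Set.ncard_eq_toFinset_card'] using this
  · have := e2.symm
    simpa [Set.ncard_eq_toFinset_card'] using this

lemma sign_count {ι κ : Type*} [Fintype ι] [Fintype κ] [DecidableEq ι] [DecidableEq κ]
    (a : ι → ℚ) (b : κ → ℚ) (ha : ∀ i, a i ≠ 0) (hb : ∀ i, b i ≠ 0)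
    (h : ∑ i, cl (a i) = ∑ i, cl (b i)) :
    Fintype.card {i // 0 < a i} = Fintype.card {i // 0 < b i} ∧
    Fintype.card {i // a i < 0} = Fintype.card {i // b i < 0} := by
  obtain ⟨⟨e⟩, P, hP⟩ := cl_sum_eq_iff a b ha hb h
  have hP' : (P.submatrix id e)ᵀ * diagonal a * (P.submatrix id e) = diagonal (b ∘ e) := by
    have := congrArg (fun X => X.submatrix e e) hP
    simp only [submatrix_diagonal_equiv] at this
    rw [← this]
    ext i j
    simp [Matrix.mul_apply, submatrix_apply]
  obtain ⟨h1, h2⟩ := sign_count_sq a (b ∘ e) ha (fun i => hb _) _ hP'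
  refine ⟨h1.trans ?_, h2.trans ?_⟩
  · exact Fintype.card_congr (e.subtypeEquiv fun i => by simp)
  · exact Fintype.card_congr (e.subtypeEquiv fun i => by simp)

section lat2
variable {V : Type*} [AddCommGroup V] [Module ℚ V] [FiniteDimensional ℚ V]
  {B : LinearMap.BilinForm ℚ V}

lemma mem_span_basis {κ : Type*} [Fintype κ] (b : Module.Basis κ ℚ V) {t : V}
    (ht : t ∈ Submodule.span ℤ (Set.range b)) : ∃ z : κ → ℤ, t = ∑ i, (z i : ℚ) • b i := by
  rw [Submodule.mem_span_range_iff_exists_fun] at ht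
  obtain ⟨z, hz⟩ := ht
  refine ⟨z, ?_⟩
  rw [← hz]
  exact Finset.sum_congr rfl fun i _ => by rw [Int.cast_smul_eq_zsmul]

lemma mem_dl_span {κ : Type*} [Fintype κ] (b : κ → V) {t : V} :
    t ∈ dl B (Submodule.span ℤ (Set.range b)) ↔ ∀ i, B t (b i) ∈ ZZ := by
  rw [mem_dl]
  constructor
  · exact fun h i => h _ (Submodule.subset_span ⟨i, rfl⟩)
  · intro h y hy
    rw [Submodule.mem_span_range_iff_exists_fun] at hy
    obtain ⟨z, rfl⟩ := hy
    rw [map_sum]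
    refine Subring.sum_mem _ fun i _ => ?_
    rw [map_zsmul]
    exact zsmul_mem (h i) _

lemma repr_B {κ : Type*} [Fintype κ] [DecidableEq κ] (b : Module.Basis κ ℚ V) (τ : κ → ℤ)
    (hb : ∀ j k, B (b j) (b k) = if j = k then (τ j : ℚ) else 0) (y : V) (i : κ) :
    B y (b i) = b.repr y i * τ i := by
  have h : B y (b i) = B (∑ j, b.repr y j • b j) (b i) := by rw [b.sum_repr]
  rw [h, map_sum, LinearMap.sum_apply]
  simp only [map_smul, LinearMap.smul_apply, hb, smul_eq_mul, mul_ite, mul_zero]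
  simp

lemma orth_expand {κ : Type*} [Fintype κ] [DecidableEq κ] (b : Module.Basis κ ℚ V) (τ : κ → ℤ)
    (hτ : ∀ i, τ i ≠ 0)
    (hb : ∀ j k, B (b j) (b k) = if j = k then (τ j : ℚ) else 0) (y : V) :
    B y y = ∑ i, (B y (b i)) ^ 2 / τ i := by
  have h1 := repr_B b τ hb y
  have h2 : B y y = ∑ i, b.repr y i * B y (b i) := by
    have h : B y y = B y (∑ j, b.repr y j • b j) := by rw [b.sum_repr]
    rw [h, map_sum]
    simp only [map_smul, smul_eq_mul]
  rw [h2]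
  refine Finset.sum_congr rfl fun i _ => ?_
  have : (τ i : ℚ) ≠ 0 := by exact_mod_cast hτ i
  rw [h1]; field_simp

lemma excl (hB : B.Nondegenerate) (hs : B.IsSymm) {L : Submodule ℤ V}
    (hL : Submodule.IsLattice ℚ L) (hself : dl B L = L)
    {κ : Type*} [Fintype κ] [DecidableEq κ] (b : Module.Basis κ ℚ V) (τ : κ → ℤ)
    (hτ : ∀ i, τ i ≠ 0)
    (hb : ∀ j k, B (b j) (b k) = if j = k then (τ j : ℚ) else 0) (i0 : κ) (p a : ℤ) (hp : p ≠ 0)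
    (h0 : τ i0 = p * a) (ha : ¬ p ∣ a)
    (hx : ∀ x : κ → ℤ, (∑ i, (x i : ℚ) ^ 2 / τ i) ∈ ZZ → p ∣ x i0) : False := by
  have sy : ∀ a b, B a b = B b a := fun a b => by simpa using hs.eq a b
  have hpq : (p : ℚ) ≠ 0 := by exact_mod_cast hp
  set Z := Submodule.span ℤ (Set.range b) with hZ
  have hZl : Submodule.IsLattice ℚ Z := isLattice_span b
  have hZd := dl_isLattice hB Z
  have key : ∀ y ∈ dl B Z ⊓ L, ∃ z : ℤ, B y (b i0) = p * z := by
    rintro y ⟨hy1, hy2⟩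
    have hy1' := (mem_dl_span (B := B) b).1 hy1
    choose x hx' using fun i => mem_ZZ.1 (hy1' i)
    have hyy : B y y ∈ ZZ := by
      have hy3 : y ∈ dl B L := by rw [hself]; exact hy2
      exact (mem_dl B).1 hy3 y hy2
    rw [orth_expand b τ hτ hb] at hyy
    simp only [← hx'] at hyy
    obtain ⟨z, hz⟩ := hx x hyy
    exact ⟨z, by rw [← hx', hz]; push_cast; ring⟩
  have he : (p : ℚ)⁻¹ • b i0 ∈ dl B (dl B Z ⊓ L) := by
    rw [mem_dl]
    intro y hy
    obtain ⟨z, hz⟩ := key y hy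
    rw [sy, map_smul, hz]
    refine mem_ZZ.2 ⟨z, ?_⟩
    simp [hpq]
  rw [dl_inf hB hs, dl_dl hB hs, hself, Submodule.mem_sup] at he
  obtain ⟨t, ht, l, hl, htl⟩ := he
  obtain ⟨z, hz⟩ := mem_span_basis b ht
  have hl' : l = (p : ℚ)⁻¹ • b i0 - t := by rw [← htl]; abel
  have hBl : ∀ i, B l (b i) = (if i0 = i then (a : ℚ) else 0) - z i * τ i := by
    intro i
    rw [hl', hz]
    simp only [map_sub, LinearMap.sub_apply, map_smul, LinearMap.smul_apply, hb, map_sum,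
      LinearMap.sum_apply, h0, smul_eq_mul]
    congr 1
    · split_ifs
      · push_cast; field_simp
      · simp
    · simp
  obtain ⟨w, hw⟩ := key l ⟨(mem_dl_span (B := B) b).2 fun i => by
    rw [hBl]
    refine sub_mem ?_ ?_
    · split_ifs
      · exact int_mem_ZZ _
      · exact zero_mem _
    · exact mul_mem (int_mem_ZZ _) (int_mem_ZZ _), hl⟩
  rw [hBl, if_pos rfl, h0] at hw
  apply ha
  have : a = p * (w + z i0 * a) := by
    have : (a : ℚ) = p * (w + z i0 * a) := by
      push_cast at hw
      linear_combination hw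
    exact_mod_cast this
  exact ⟨_, this⟩

lemma vdBlij (hB : B.Nondegenerate) (hs : B.IsSymm) {L : Submodule ℤ V} (h : EU B L)
    {κ : Type*} [Fintype κ] [DecidableEq κ] (b : Module.Basis κ ℚ V) (τ : κ → ℤ)
    (hτ : ∀ i, τ i = 1 ∨ τ i = -1)
    (hb : ∀ j k, B (b j) (b k) = if j = k then (τ j : ℚ) else 0) : (8 : ℤ) ∣ ∑ i, τ i := by
  have sy : ∀ a b, B a b = B b a := fun a b => by simpa using hs.eq a b
  have hL := h.lat
  set I := Submodule.span ℤ (Set.range b) with hI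
  have hIl : Submodule.IsLattice ℚ I := isLattice_span b
  have hBz : ∀ (z : κ → ℤ) i, B (∑ i, (z i : ℚ) • b i) (b i) = z i * τ i := by
    intro z i
    simp [map_sum, LinearMap.sum_apply, hb]
  have hBB : ∀ (z w : κ → ℤ), B (∑ i, (z i : ℚ) • b i) (∑ i, (w i : ℚ) • b i)
      = ((∑ i, τ i * z i * w i : ℤ) : ℚ) := by
    intro z w
    rw [map_sum]
    push_cast
    refine Finset.sum_congr rfl fun i _ => ?_
    rw [map_smul, hBz]; simp; ring
  have hdI : dl B I = I := by
    apply le_antisymm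
    · intro x hx
      have hx' := (mem_dl_span (B := B) b).1 hx
      choose z hz using fun i => mem_ZZ.1 (hx' i)
      have : x = ∑ i, (z i * τ i) • b i := by
        conv_lhs => rw [← b.sum_repr x]
        refine Finset.sum_congr rfl fun i _ => ?_
        have h1 := repr_B b τ hb x i
        rw [← hz] at h1
        have h2 : b.repr x i = ((z i * τ i : ℤ) : ℚ) := by
          push_cast
          rw [h1]
          rcases hτ i with h | h <;> rw [h] <;> simp
        rw [h2, Int.cast_smul_eq_zsmul]
      rw [this]
      exact Submodule.sum_mem _ fun i _ => Submodule.smul_mem _ _ (Submodule.subset_span ⟨i, rfl⟩)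
    · intro x hx
      rw [mem_dl_span]
      obtain ⟨z, rfl⟩ := mem_span_basis b hx
      intro i
      rw [hBz]
      exact mul_mem (int_mem_ZZ _) (int_mem_ZZ _)
  have hc : (2 : ℚ)⁻¹ • (∑ i, ((1 : ℤ) : ℚ) • b i) ∈ dl B (L ⊓ I) := by
    rw [mem_dl]
    rintro y ⟨hy1, hy2⟩
    obtain ⟨z, rfl⟩ := mem_span_basis b hy2
    obtain ⟨w, hw⟩ := h.even _ hy1
    rw [hBB] at hw
    have hw' : (∑ i, τ i * z i * z i : ℤ) = 2 * w := by exact_mod_cast hw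
    rw [map_smul, LinearMap.smul_apply, hBB (fun _ => 1) z]
    have h2 : (2 : ℤ) ∣ ∑ i, τ i * 1 * z i := by
      have : (2 : ℤ) ∣ ∑ i, (τ i * z i * z i - τ i * 1 * z i) := by
        refine Finset.dvd_sum fun i _ => ?_
        have : (2:ℤ) ∣ z i * (z i - 1) := by
          have := Int.even_mul_pred_self (z i)
          exact this.two_dvd
        have e : τ i * z i * z i - τ i * 1 * z i = τ i * (z i * (z i - 1)) := by ring
        rw [e]
        exact Dvd.dvd.mul_left this _
      rw [Finset.sum_sub_distrib, hw'] at this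
      omega
    obtain ⟨v, hv⟩ := h2
    rw [hv]
    exact mem_ZZ.2 ⟨v, by simp⟩
  rw [dl_inf hB hs, h.self, hdI, Submodule.mem_sup] at hc
  obtain ⟨l, hl, i, hi, hli⟩ := hc
  obtain ⟨z, hz⟩ := mem_span_basis b hi
  have h2l : (2 : ℚ) • l = ∑ j, ((1 - 2 * z j : ℤ) : ℚ) • b j := by
    have : l = (2 : ℚ)⁻¹ • (∑ i, ((1 : ℤ) : ℚ) • b i) - i := by rw [← hli]; abel
    rw [this, hz, smul_sub, smul_smul, Finset.smul_sum, ]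
    simp only [Int.cast_sub, sub_smul, Finset.sum_sub_distrib, Int.cast_mul]
    rw [Finset.smul_sum]
    simp only [smul_smul]
    norm_num
  obtain ⟨w, hw⟩ := h.even l hl
  have h4 := hBB (fun j => 1 - 2 * z j) (fun j => 1 - 2 * z j)
  rw [← h2l, map_smul, LinearMap.map_smul₂, hw] at h4
  have h5 : (8 * w : ℤ) = ∑ j, τ j * (1 - 2 * z j) * (1 - 2 * z j) := by
    have : ((8 * w : ℤ) : ℚ) = ((∑ j, τ j * (1 - 2 * z j) * (1 - 2 * z j) : ℤ) : ℚ) := by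
      rw [← h4]; push_cast; simp only [smul_eq_mul]; ring
    exact_mod_cast this
  have h6 : (8 : ℤ) ∣ ∑ j, (τ j * (1 - 2 * z j) * (1 - 2 * z j) - τ j) := by
    refine Finset.dvd_sum fun j _ => ?_
    obtain ⟨v, hv⟩ := (Int.even_mul_pred_self (z j)).two_dvd
    refine ⟨τ j * v, ?_⟩
    linear_combination 4 * τ j * hv
  rw [Finset.sum_sub_distrib, ← h5] at h6
  omega

end lat2

/-- The standard lattice. -/
def zlat (ι : Type*) : Submodule ℤ (ι → ℚ) where
  carrier := {v | ∀ i, v i ∈ ZZ}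
  add_mem' := fun ha hb i => add_mem (ha i) (hb i)
  zero_mem' := fun i => zero_mem _
  smul_mem' := fun c x hx i => zsmul_mem (hx i) c

lemma mem_zlat {ι : Type*} {v : ι → ℚ} : v ∈ zlat ι ↔ ∀ i, v i ∈ ZZ := Iff.rfl

section
variable {ι : Type*} [Fintype ι] [DecidableEq ι]

/-- The rational bilinear form of an integer matrix. -/
noncomputable def bf (A : Matrix ι ι ℤ) : LinearMap.BilinForm ℚ (ι → ℚ) :=
  Matrix.toBilin' (A.map (fun z : ℤ => (z : ℚ)))

lemma bf_apply (A : Matrix ι ι ℤ) (x y : ι → ℚ) :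
    bf A x y = x ⬝ᵥ (A.map (fun z : ℤ => (z : ℚ))) *ᵥ y := Matrix.toBilin'_apply' _ _ _

lemma map_det (A : Matrix ι ι ℤ) : (A.map (fun z : ℤ => (z : ℚ))).det = (A.det : ℚ) :=
  (Int.cast_det A).symm

lemma bf_nondeg (A : Matrix ι ι ℤ) (hA : A.det ≠ 0) : (bf A).Nondegenerate := by
  apply LinearMap.BilinForm.nondegenerate_toBilin'_of_det_ne_zero'
  rw [map_det]; exact_mod_cast hA

lemma bf_symm (A : Matrix ι ι ℤ) (hA : A.IsSymm) : (bf A).IsSymm := by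
  constructor
  intro x y
  rw [bf_apply, bf_apply, dotProduct_mulVec, ← mulVec_transpose, dotProduct_comm,
    ← transpose_map, hA.eq]

lemma zlat_eq : zlat ι = Submodule.span ℤ (Set.range (Pi.basisFun ℚ ι)) := by
  apply le_antisymm
  · intro x hx
    choose z hz using fun i => mem_ZZ.1 (hx i)
    rw [Submodule.mem_span_range_iff_exists_fun]
    refine ⟨z, ?_⟩
    ext i
    simp [Pi.single_apply, ← hz, Finset.sum_apply]
  · rw [Submodule.span_le]
    rintro _ ⟨j, rfl⟩ i
    simp only [Pi.basisFun_apply, Pi.single_apply]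
    split_ifs
    · exact one_mem _
    · exact zero_mem _

lemma zlat_lat : Submodule.IsLattice ℚ (zlat ι) := by
  rw [zlat_eq]; exact isLattice_span _

lemma zlat_self (A : Matrix ι ι ℤ) (hs : A.IsSymm) (hA : IsUnit A.det) :
    dl (bf A) (zlat ι) = zlat ι := by
  apply le_antisymm
  · intro x hx
    rw [zlat_eq, mem_dl_span] at hx
    have h1 : ∀ i, (x ᵥ* (A.map (fun z : ℤ => (z : ℚ)))) i ∈ ZZ := by
      intro i
      have := hx i
      rw [bf_apply, dotProduct_mulVec, Pi.basisFun_apply, dotProduct_single_one] at this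
      exact this
    have h2 : x = (x ᵥ* (A.map (fun z : ℤ => (z : ℚ)))) ᵥ* ((A⁻¹).map (fun z : ℤ => (z : ℚ))) := by
      rw [vecMul_vecMul]
      have : A.map (fun z : ℤ => (z : ℚ)) * (A⁻¹).map (fun z : ℤ => (z : ℚ)) = 1 := by
        have e := congrArg (fun X => X.map (Int.castRingHom ℚ)) (mul_nonsing_inv A hA)
        simp only [Matrix.map_mul] at e
        simpa using e
      rw [this, vecMul_one]
    rw [h2]
    intro i
    refine Subring.sum_mem _ fun j _ => mul_mem (h1 j) (int_mem_ZZ _)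
  · intro x hx
    rw [mem_dl]
    intro y hy
    rw [bf_apply]
    refine Subring.sum_mem _ fun j _ => mul_mem (hx j) ?_
    exact Subring.sum_mem _ fun k _ => mul_mem (int_mem_ZZ _) (hy k)

/-- The basis of columns of a nonsingular matrix. -/
noncomputable def colBasis (P : Matrix ι ι ℚ) (hP : P.det ≠ 0) : Module.Basis ι ℚ (ι → ℚ) :=
  (Pi.basisFun ℚ ι).map (Matrix.toLinearEquiv' P (P.invertibleOfIsUnitDet (isUnit_iff_ne_zero.2 hP)))

lemma colBasis_apply (P : Matrix ι ι ℚ) (hP : P.det ≠ 0) (i : ι) : colBasis P hP i = P.col i := by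
  ext j
  simp [colBasis, Matrix.toLinearEquiv']

lemma bf_col {κ : Type*} (A : Matrix ι ι ℤ) (P : Matrix ι κ ℚ) (i j : κ) :
    bf A (P.col i) (P.col j) = (Pᵀ * A.map (fun z : ℤ => (z : ℚ)) * P) i j := by
  rw [bf_apply, Matrix.mul_assoc]
  simp [Matrix.mul_apply, dotProduct, mulVec, Matrix.col_apply]
end

/-! ## Milnor's computation: unimodular forms are rationally sums of `±1` -/

lemma zmod_two_sq (u : ZMod 2) : ∃ r : ZMod 2, u = r * r := by revert u; decide

def Smooth (p : ℕ) (u : ℤ) : Prop := u ≠ 0 ∧ ∀ q : ℕ, q.Prime → (q : ℤ) ∣ u → q < p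

lemma Smooth.mul {p : ℕ} {u v : ℤ} (hu : Smooth p u) (hv : Smooth p v) : Smooth p (u * v) := by
  refine ⟨mul_ne_zero hu.1 hv.1, fun q hq hd => ?_⟩
  rcases (Nat.prime_iff_prime_int.1 hq).dvd_or_dvd hd with h | h
  · exact hu.2 q hq h
  · exact hv.2 q hq h

lemma Smooth.of_lt {p : ℕ} {u : ℤ} (h0 : u ≠ 0) (h : |u| < p) : Smooth p u := by
  refine ⟨h0, fun q hq hd => ?_⟩
  have := Int.le_of_dvd (abs_pos.2 h0) ((dvd_abs _ _).2 hd)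
  have h2 : (q : ℤ) < p := by omega
  exact_mod_cast h2

lemma Smooth.not_dvd {p : ℕ} (hp : p.Prime) {u : ℤ} (hu : Smooth p u) : ¬ (p : ℤ) ∣ u :=
  fun h => lt_irrefl _ (hu.2 p hp h)

def SS (p : ℕ) : AddSubgroup GW := AddSubgroup.closure {x | ∃ u : ℤ, Smooth p u ∧ x = cl (u : ℚ)}

lemma SS.mem {p : ℕ} {u : ℤ} (hu : Smooth p u) : cl (u : ℚ) ∈ SS p :=
  AddSubgroup.subset_closure ⟨u, hu, rfl⟩

noncomputable def ff (p : ℕ) (u : ℤ) : GW ⧸ SS p := QuotientAddGroup.mk (cl ((p : ℚ) * u))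

lemma mk_smooth {p : ℕ} {u : ℤ} (hu : Smooth p u) :
    (QuotientAddGroup.mk (cl (u : ℚ)) : GW ⧸ SS p) = 0 :=
  (QuotientAddGroup.eq_zero_iff _).2 (SS.mem hu)

section
variable {p : ℕ}

lemma smooth_one (hp : p.Prime) : Smooth p 1 := Smooth.of_lt one_ne_zero (by
  have := hp.one_lt
  simp; omega)

lemma smooth_neg_one (hp : p.Prime) : Smooth p (-1) := Smooth.of_lt (by norm_num) (by
  have := hp.one_lt
  simp; omega)

lemma ff_sq (hp : p.Prime) (s b : ℤ) (hb : b ≠ 0) : ff p (s * b ^ 2) = ff p s := by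
  unfold ff
  congr 1
  have : (p : ℚ) * ((s * b ^ 2 : ℤ) : ℚ) = (p * s) * (b : ℚ) ^ 2 := by push_cast; ring
  rw [this, cl_mul_sq _ _ (by exact_mod_cast hb)]

lemma ff_neg (hp : p.Prime) (s : ℤ) (hs : s ≠ 0) : ff p s + ff p (-s) = 0 := by
  unfold ff
  have hpq : (p : ℚ) ≠ 0 := by exact_mod_cast hp.ne_zero
  have hsq : (s : ℚ) ≠ 0 := by exact_mod_cast hs
  have h1 := cl_neg ((p : ℚ) * s) (mul_ne_zero hpq hsq)
  have h2 : (p : ℚ) * ((-s : ℤ) : ℚ) = -((p : ℚ) * s) := by push_cast; ring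
  rw [h2, ← QuotientAddGroup.mk_add, h1, QuotientAddGroup.mk_add]
  have e1 := mk_smooth (smooth_one hp)
  have e2 := mk_smooth (smooth_neg_one hp)
  push_cast at e1 e2
  rw [e1, e2, add_zero]

lemma ff_two (hp : p.Prime) (n1 n2 l r s : ℤ) (h1 : n1 ≠ 0) (h2 : n2 ≠ 0) (h1' : |n1| < p) (h2' : |n2| < p)
    (h : n1 * n2 = p * l + r) (hr : 0 < r) (hr' : r < p) (hs : Smooth p s) :
    ff p (n1 * n2 * s) = ff p (r * s) := by
  have hpq : (p : ℚ) ≠ 0 := by exact_mod_cast hp.ne_zero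
  have hp1 := hp.one_lt
  by_cases hl : l = 0
  · rw [h, hl]; simp
  have hl' : |l| < p := by
    rw [abs_lt] at *
    have hb : |n1 * n2| ≤ (p - 1) * (p - 1) := by
      rw [abs_mul]
      refine mul_le_mul ?_ ?_ (abs_nonneg _) (by omega)
      · rw [abs_le]; omega
      · rw [abs_le]; omega
    rw [abs_le, h] at hb
    have hp0 : (0 : ℤ) < p := by omega
    constructor
    · by_contra hc
      push Not at hc
      nlinarith
    · by_contra hc
      push Not at hc
      nlinarith
  have S1 := Smooth.of_lt h1 h1'
  have S2 := Smooth.of_lt h2 h2'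
  have Sl := Smooth.of_lt hl hl'
  have Sr : Smooth p r := Smooth.of_lt hr.ne' (by rwa [abs_of_pos hr])
  have hq : ∀ {u : ℤ}, Smooth p u → (u : ℚ) ≠ 0 := fun hu => by exact_mod_cast hu.1
  have hab : (p : ℚ) ^ 2 * l * s + p * r * s = p * ((n1 * n2 * s : ℤ) : ℚ) := by
    rw [h]; push_cast; ring
  have key := cl_add ((p : ℚ) ^ 2 * l * s) (p * r * s)
    (mul_ne_zero (mul_ne_zero (pow_ne_zero _ hpq) (hq Sl)) (hq hs))
    (mul_ne_zero (mul_ne_zero hpq (hq Sr)) (hq hs))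
    (by rw [hab]; exact mul_ne_zero hpq (hq ((S1.mul S2).mul hs)))
  rw [hab] at key
  have e1 : (p : ℚ) ^ 2 * l * s = ((l * s : ℤ) : ℚ) * (p : ℚ) ^ 2 := by push_cast; ring
  have e2 : (p : ℚ) ^ 2 * l * s * (p * r * s) * (p * ((n1 * n2 * s : ℤ) : ℚ))
    = ((l * r * (n1 * n2 * s) : ℤ) : ℚ) * ((p : ℚ) ^ 2 * s) ^ 2 := by push_cast; ring
  have e3 : (p : ℚ) * r * s = p * ((r * s : ℤ) : ℚ) := by push_cast; ring
  rw [e2, e1, cl_mul_sq _ _ hpq, cl_mul_sq _ _ (mul_ne_zero (pow_ne_zero _ hpq) (hq hs)), e3] at key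
  have key2 := congrArg (QuotientAddGroup.mk : GW → GW ⧸ SS p) key
  rw [QuotientAddGroup.mk_add, QuotientAddGroup.mk_add, mk_smooth (Sl.mul hs),
    mk_smooth ((Sl.mul Sr).mul ((S1.mul S2).mul hs)), zero_add, add_zero] at key2
  exact key2.symm

lemma ff_two' (hp : p.Prime) (n1 n2 s : ℤ) (h1 : n1 ≠ 0) (h2 : n2 ≠ 0) (h1' : |n1| < p) (h2' : |n2| < p)
    (hs : Smooth p s) :
    ff p (n1 * n2 * s) = ff p ((n1 * n2) % p * s) := by
  have hp0 : (0 : ℤ) < p := by exact_mod_cast hp.pos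
  have S := (Smooth.of_lt h1 h1').mul (Smooth.of_lt h2 h2')
  refine ff_two hp n1 n2 (n1 * n2 / p) _ s h1 h2 h1' h2' (Int.mul_ediv_add_emod _ _).symm ?_
    (Int.emod_lt_of_pos _ hp0) hs
  refine lt_of_le_of_ne (Int.emod_nonneg _ hp0.ne') fun h => ?_
  exact S.not_dvd hp (Int.dvd_of_emod_eq_zero h.symm)

lemma ff_mod_aux (hp : p.Prime) (s : ℤ) : Smooth p s → ∀ t, Smooth p t → ff p (s * t) = ff p (s % p * t) := by
  have hp0 : (0 : ℤ) < p := by exact_mod_cast hp.pos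
  induction s using UniqueFactorizationMonoid.induction_on_prime with
  | h₁ => intro h; exact absurd rfl h.1
  | h₂ u hu =>
    intro h t ht
    have : |u| < p := by
      rw [Int.isUnit_iff_abs_eq.1 hu]
      exact_mod_cast hp.one_lt
    have := ff_two' hp u 1 t h.1 one_ne_zero this (by simpa using hp.one_lt) ht
    simpa using this
  | h₃ a q ha hq ih =>
    intro h t ht
    have Sa : Smooth p a := ⟨ha, fun r hr hd => h.2 r hr (Dvd.dvd.mul_left hd _)⟩
    have hq' : |q| < p := by
      have := h.2 q.natAbs (Int.prime_iff_natAbs_prime.1 hq) (by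
        rw [Int.natCast_natAbs, abs_dvd]; exact dvd_mul_right _ _)
      rw [Int.abs_eq_natAbs]; exact_mod_cast this
    have Sq : Smooth p q := Smooth.of_lt hq.ne_zero hq'
    have e1 : q * a * t = a * (q * t) := by ring
    rw [e1, ih Sa _ (Sq.mul ht), ← mul_assoc, ff_two' hp _ q t ?_ hq.ne_zero ?_ hq' ht]
    · congr 2
      rw [Int.mul_emod, Int.emod_emod_of_dvd _ (dvd_refl _), ← Int.mul_emod, mul_comm]
    · intro h
      exact Sa.not_dvd hp (Int.dvd_of_emod_eq_zero h)
    · rw [abs_of_nonneg (Int.emod_nonneg _ hp0.ne')]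
      exact Int.emod_lt_of_pos _ hp0

lemma ff_congr (hp : p.Prime) {s t : ℤ} (hs : Smooth p s) (ht : Smooth p t) (h : (s : ZMod p) = t) :
    ff p s = ff p t := by
  have h1 := ff_mod_aux hp s hs 1 (smooth_one hp)
  have h2 := ff_mod_aux hp t ht 1 (smooth_one hp)
  rw [mul_one, mul_one] at h1 h2
  rw [h1, h2, (ZMod.intCast_eq_intCast_iff' _ _ _).1 h]

end

section
variable {p : ℕ} [hp : Fact p.Prime]

noncomputable def FF (a : ZMod p) : GW ⧸ SS p := ff p (a.val : ℤ)

lemma smooth_val {a : ZMod p} (ha : a ≠ 0) : Smooth p (a.val : ℤ) := by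
  refine Smooth.of_lt ?_ ?_
  · have : a.val ≠ 0 := (ZMod.val_ne_zero a).2 ha
    exact_mod_cast this
  · have := ZMod.val_lt a
    rw [abs_of_nonneg (Int.natCast_nonneg _)]
    exact_mod_cast this

lemma FF_cast {s : ℤ} (hs : Smooth p s) : FF (s : ZMod p) = ff p s := by
  have hp' := hp.out
  refine ff_congr hp' (smooth_val ?_) hs (by simp)
  intro h
  exact hs.not_dvd hp' ((ZMod.intCast_zmod_eq_zero_iff_dvd _ _).1 h)

lemma FF_sq (a b : ZMod p) (ha : a ≠ 0) (hb : b ≠ 0) : FF (a * b ^ 2) = FF a := by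
  have hp' := hp.out
  have h1 : a * b ^ 2 = (((a.val : ℤ) * (b.val : ℤ) ^ 2 : ℤ) : ZMod p) := by simp
  have Sb := smooth_val hb
  rw [h1, FF_cast, ff_sq hp' _ _ Sb.1]
  · rfl
  · rw [pow_two]; exact (smooth_val ha).mul (Sb.mul Sb)

lemma FF_neg (a : ZMod p) (ha : a ≠ 0) : FF a + FF (-a) = 0 := by
  have hp' := hp.out
  have h1 : -a = ((-(a.val : ℤ) : ℤ) : ZMod p) := by simp
  have Sa := smooth_val ha
  rw [h1, FF_cast (by rw [← neg_one_mul]; exact (smooth_neg_one hp').mul Sa)]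
  exact ff_neg hp' _ Sa.1

lemma FF_add (a b : ZMod p) (ha : a ≠ 0) (hb : b ≠ 0) (hab : a + b ≠ 0) :
    FF a + FF b = FF (a + b) + FF (a * b * (a + b)) := by
  have hp' := hp.out
  have hpq : (p : ℚ) ≠ 0 := by exact_mod_cast hp'.ne_zero
  have Sa := smooth_val ha
  obtain ⟨v, Sv, hv, Sav⟩ : ∃ v : ℤ, Smooth p v ∧ (v : ZMod p) = b ∧ Smooth p ((a.val : ℤ) + v) := by
    have h1 := ZMod.val_lt a
    have h2 := ZMod.val_lt b
    have h3 := Sa.1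
    have h4 := (smooth_val hb).1
    have h5 : ∀ v : ℤ, (v : ZMod p) = b → (a.val : ℤ) + v ≠ 0 := by
      intro v hv h
      apply hab
      have := congrArg (fun z : ℤ => (z : ZMod p)) h
      simpa [hv] using this
    by_cases h : a.val + b.val < p
    · exact ⟨b.val, smooth_val hb, by simp, Smooth.of_lt (h5 _ (by simp)) (by rw [abs_lt]; omega)⟩
    · exact ⟨(b.val : ℤ) - p, Smooth.of_lt (by omega) (by rw [abs_lt]; omega), by simp,
        Smooth.of_lt (h5 _ (by simp)) (by rw [abs_lt]; omega)⟩
  have hq : ∀ {u : ℤ}, Smooth p u → (u : ℚ) ≠ 0 := fun hu => by exact_mod_cast hu.1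
  have e0 : (p : ℚ) * (a.val : ℤ) + p * v = p * (((a.val : ℤ) + v : ℤ) : ℚ) := by push_cast; ring
  have key := cl_add ((p : ℚ) * (a.val : ℤ)) (p * v) (mul_ne_zero hpq (hq Sa)) (mul_ne_zero hpq (hq Sv))
    (by rw [e0]; exact mul_ne_zero hpq (hq Sav))
  have e1 : (p : ℚ) * (a.val : ℤ) * (p * v) * (p * (((a.val : ℤ) + v : ℤ) : ℚ)) =
    (p * (((a.val : ℤ) * v * ((a.val : ℤ) + v) : ℤ) : ℚ)) * (p : ℚ) ^ 2 := by push_cast; ring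
  rw [e0, e1, cl_mul_sq _ _ hpq] at key
  have key2 := congrArg (QuotientAddGroup.mk : GW → GW ⧸ SS p) key
  rw [QuotientAddGroup.mk_add, QuotientAddGroup.mk_add] at key2
  change ff p _ + ff p _ = ff p _ + ff p _ at key2
  rw [← FF_cast Sa, ← FF_cast Sv, ← FF_cast Sav, ← FF_cast ((Sa.mul Sv).mul Sav)] at key2
  push_cast at key2
  rw [hv] at key2
  simpa using key2

lemma FF_pair (a b x y : ZMod p) (ha : a ≠ 0) (hb : b ≠ 0) (h : a * x ^ 2 + b * y ^ 2 ≠ 0) :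
    FF a + FF b = FF (a * x ^ 2 + b * y ^ 2) + FF ((a * x ^ 2 + b * y ^ 2) * a * b) := by
  by_cases hx : x = 0
  · have hy : y ≠ 0 := by rintro rfl; apply h; rw [hx]; ring
    have e1 : a * x ^ 2 + b * y ^ 2 = b * y ^ 2 := by rw [hx]; ring
    have e2 : b * y ^ 2 * a * b = a * (b * y) ^ 2 := by ring
    rw [e1, e2, FF_sq _ _ hb hy, FF_sq _ _ ha (mul_ne_zero hb hy), add_comm]
  by_cases hy : y = 0
  · have e1 : a * x ^ 2 + b * y ^ 2 = a * x ^ 2 := by rw [hy]; ring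
    have e2 : a * x ^ 2 * a * b = b * (a * x) ^ 2 := by ring
    rw [e1, e2, FF_sq _ _ ha hx, FF_sq _ _ hb (mul_ne_zero ha hx)]
  have hX : a * x ^ 2 ≠ 0 := mul_ne_zero ha (pow_ne_zero _ hx)
  have hY : b * y ^ 2 ≠ 0 := mul_ne_zero hb (pow_ne_zero _ hy)
  rw [← FF_sq a x ha hx, ← FF_sq b y hb hy, FF_add _ _ hX hY h]
  have e2 : a * x ^ 2 * (b * y ^ 2) * (a * x ^ 2 + b * y ^ 2)
    = ((a * x ^ 2 + b * y ^ 2) * a * b) * (x * y) ^ 2 := by ring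
  rw [e2, FF_sq _ _ (mul_ne_zero (mul_ne_zero h ha) hb) (mul_ne_zero hx hy)]

lemma FF_cancel (a c : ZMod p) (ha : a ≠ 0) (hc : c ≠ 0) (h : IsSquare (-(a * c))) :
    FF a + FF c = 0 := by
  obtain ⟨d, hd⟩ := h
  have hd0 : d ≠ 0 := by
    rintro rfl
    simp at hd
    tauto
  have : c = -a * (d / a) ^ 2 := by
    field_simp
    linear_combination -hd
  rw [this, FF_sq _ _ (neg_ne_zero.2 ha) (div_ne_zero hd0 ha), FF_neg a ha]

def NF (x : GW ⧸ SS p) : Prop := x = 0 ∨ (∃ a : ZMod p, a ≠ 0 ∧ x = FF a) ∨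
  ∃ a b : ZMod p, a ≠ 0 ∧ b ≠ 0 ∧ ¬ IsSquare (-(a * b)) ∧ x = FF a + FF b

lemma NF.add {x : GW ⧸ SS p} (hx : NF x) (c : ZMod p) (hc : c ≠ 0) : NF (x + FF c) := by
  rcases hx with rfl | ⟨a, ha, rfl⟩ | ⟨a, b, ha, hb, hab, rfl⟩
  · exact Or.inr (Or.inl ⟨c, hc, zero_add _⟩)
  · by_cases h : IsSquare (-(a * c))
    · exact Or.inl (FF_cancel a c ha hc h)
    · exact Or.inr (Or.inr ⟨a, c, ha, hc, h, rfl⟩)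
  · have hp2 : p ≠ 2 := by
      rintro rfl
      apply hab
      obtain ⟨r, hr⟩ := zmod_two_sq (-(a * b))
      exact ⟨r, hr⟩
    obtain ⟨x, y, hxy⟩ : ∃ x y : ZMod p, a * x ^ 2 + b * y ^ 2 = -c := by
      have := FiniteField.exists_root_sum_quadratic (R := ZMod p)
        (f := Polynomial.C a * Polynomial.X ^ 2 + Polynomial.C c)
        (g := Polynomial.C b * Polynomial.X ^ 2)
        (by compute_degree!) (by compute_degree!) (by
          rw [ZMod.card]
          exact hp.out.mod_two_eq_one_iff_ne_two.2 hp2)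
      obtain ⟨x, y, h⟩ := this
      refine ⟨x, y, ?_⟩
      simp at h
      linear_combination h
    have h := FF_pair a b x y ha hb (by rw [hxy]; exact neg_ne_zero.2 hc)
    rw [hxy] at h
    refine Or.inr (Or.inl ⟨-c * a * b, mul_ne_zero (mul_ne_zero (neg_ne_zero.2 hc) ha) hb, ?_⟩)
    rw [h, add_assoc, add_comm (FF (-c * a * b)), ← add_assoc, add_comm (FF (-c)), FF_neg c hc, zero_add]

lemma SS_succ_NF {x : GW} (hx : x ∈ SS (p + 1)) : NF (QuotientAddGroup.mk x : GW ⧸ SS p) := by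
  have hp' := hp.out
  have hpq : (p : ℚ) ≠ 0 := by exact_mod_cast hp'.ne_zero
  have gen : ∀ u : ℤ, Smooth (p + 1) u → (QuotientAddGroup.mk (cl (u : ℚ)) : GW ⧸ SS p) = 0 ∨
      ∃ c : ZMod p, c ≠ 0 ∧ (QuotientAddGroup.mk (cl (u : ℚ)) : GW ⧸ SS p) = FF c := by
    intro u hu
    obtain ⟨k, v, hv, huv⟩ := FiniteMultiplicity.exists_eq_pow_mul_and_not_dvd
      (Int.finiteMultiplicity_iff.2 ⟨by simpa using hp'.ne_one, hu.1⟩ : FiniteMultiplicity (p : ℤ) u)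
      |>.imp (fun v h => h) |> fun ⟨v, h⟩ => (⟨multiplicity (p : ℤ) u, v, h.2, h.1⟩ :
        ∃ (k : ℕ) (v : ℤ), ¬ (p : ℤ) ∣ v ∧ u = (p : ℤ) ^ k * v)
    have Sv : Smooth p v := by
      refine ⟨by rintro rfl; simp at hv, fun q hq hd => ?_⟩
      have := hu.2 q hq (by rw [huv]; exact Dvd.dvd.mul_left hd _)
      refine lt_of_le_of_ne (by omega) ?_
      rintro rfl
      exact hv hd
    rcases Nat.even_or_odd' k with ⟨j, rfl | rfl⟩
    · left
      have : (u : ℚ) = v * ((p : ℚ) ^ j) ^ 2 := by rw [huv]; push_cast; ring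
      rw [this, cl_mul_sq _ _ (pow_ne_zero _ hpq), mk_smooth Sv]
    · right
      have : (u : ℚ) = (p * v) * ((p : ℚ) ^ j) ^ 2 := by rw [huv]; push_cast; ring
      rw [this, cl_mul_sq _ _ (pow_ne_zero _ hpq)]
      refine ⟨(v : ZMod p), fun h => hv ((ZMod.intCast_zmod_eq_zero_iff_dvd _ _).1 h), ?_⟩
      rw [FF_cast Sv]; rfl
  induction hx using AddSubgroup.closure_induction_right with
  | zero => exact Or.inl rfl
  | add_right x hx y hy ih =>
    obtain ⟨u, hu, rfl⟩ := hy
    rw [QuotientAddGroup.mk_add]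
    rcases gen u hu with h | ⟨c, hc, h⟩
    · rw [h, add_zero]; exact ih
    · rw [h]; exact ih.add c hc
  | add_neg_cancel x hx y hy ih =>
    obtain ⟨u, hu, rfl⟩ := hy
    rw [QuotientAddGroup.mk_add, QuotientAddGroup.mk_neg]
    rcases gen u hu with h | ⟨c, hc, h⟩
    · rw [h, neg_zero, add_zero]; exact ih
    · rw [h, show -FF c = FF (-c) by rw [eq_comm, eq_neg_iff_add_eq_zero, add_comm]; exact FF_neg c hc]
      exact ih.add _ (neg_ne_zero.2 hc)

end

lemma SS_rep {p : ℕ} {x : GW} (hx : x ∈ SS p) :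
    ∃ (k r : ℕ) (τ : Fin r → ℤ), (∀ i, Smooth p (τ i)) ∧
      x + k • (cl 1 + cl (-1)) = ∑ i, cl (τ i : ℚ) := by
  induction hx using AddSubgroup.closure_induction_right with
  | zero => exact ⟨0, 0, Fin.elim0, fun i => i.elim0, by simp⟩
  | add_right x hx y hy ih =>
    obtain ⟨u, hu, rfl⟩ := hy
    obtain ⟨k, r, τ, h1, h2⟩ := ih
    refine ⟨k, r + 1, Fin.cons u τ, fun i => ?_, ?_⟩
    · refine Fin.cases ?_ (fun i => ?_) i
      · simpa using hu
      · simpa using h1 i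
    · rw [Fin.sum_univ_succ]
      simp only [Fin.cons_zero, Fin.cons_succ, ← h2]
      abel
  | add_neg_cancel x hx y hy ih =>
    obtain ⟨u, hu, rfl⟩ := hy
    obtain ⟨k, r, τ, h1, h2⟩ := ih
    refine ⟨k + 1, r + 1, Fin.cons (-u) τ, fun i => ?_, ?_⟩
    · refine Fin.cases ?_ (fun i => ?_) i
      · refine ⟨by simpa using hu.1, fun q hq hd => hu.2 q hq ?_⟩
        simpa using hd
      · simpa using h1 i
    · rw [Fin.sum_univ_succ]
      simp only [Fin.cons_zero, Fin.cons_succ, ← h2]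
      rw [add_smul, one_smul, ← cl_neg (u : ℚ) (by exact_mod_cast hu.1)]
      push_cast
      abel

lemma orth_basis {ι κ : Type*} [Fintype ι] [DecidableEq ι] [Fintype κ] [DecidableEq κ]
    (A : Matrix ι ι ℤ) (R : Matrix ι κ ℚ) (e : ι ≃ κ) (τ : κ → ℚ) (hτ : ∀ i, τ i ≠ 0)
    (h : Rᵀ * A.map (fun z : ℤ => (z : ℚ)) * R = diagonal τ) :
    ∃ b : Module.Basis κ ℚ (ι → ℚ), ∀ j k, bf A (b j) (b k) = if j = k then τ j else 0 := by
  have h' : (R.submatrix id e)ᵀ * A.map (fun z : ℤ => (z : ℚ)) * (R.submatrix id e)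
      = diagonal (τ ∘ e) := by
    have := congrArg (fun X => X.submatrix e e) h
    simp only [submatrix_diagonal_equiv] at this
    rw [← this]
    ext i j
    simp [Matrix.mul_apply, submatrix_apply]
  have hd := det_ne_of_congr _ _ (det_diag_ne (τ ∘ e) fun i => hτ _) _ h'
  refine ⟨(colBasis _ hd).reindex e, fun j k => ?_⟩
  rw [Module.Basis.reindex_apply, Module.Basis.reindex_apply, colBasis_apply, colBasis_apply, bf_col,
    h', diagonal_apply]
  simp

lemma unimod_excl {ι : Type*} [Fintype ι] [DecidableEq ι] (A : Matrix ι ι ℤ) (hs : A.IsSymm)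
    (hA : IsUnit A.det) (P : Matrix ι ι ℚ) (d : ι → ℚ) (hd : ∀ i, d i ≠ 0)
    (hP : Pᵀ * A.map (fun z : ℤ => (z : ℚ)) * P = diagonal d) (k : ℕ)
    {κ : Type*} [Fintype κ] [DecidableEq κ] (τ : κ → ℤ) (hτ : ∀ i, τ i ≠ 0)
    (hcl : ∑ i, cl (d i) + k • (cl 1 + cl (-1)) = ∑ i, cl (τ i : ℚ))
    (i0 : κ) (p a : ℤ) (hp : p ≠ 0) (h0 : τ i0 = p * a) (ha : ¬ p ∣ a)
    (hx : ∀ x : κ → ℤ, (∑ i, (x i : ℚ) ^ 2 / τ i) ∈ ZZ → p ∣ x i0) : False := by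
  let σ : Fin k ⊕ Fin k → ℤ := Sum.elim (fun _ => 1) (fun _ => -1)
  let A' : Matrix (ι ⊕ (Fin k ⊕ Fin k)) (ι ⊕ (Fin k ⊕ Fin k)) ℤ := fromBlocks A 0 0 (diagonal σ)
  have hs' : A'.IsSymm := by
    apply IsSymm.fromBlocks hs (by simp) (isSymm_diagonal _)
  have hdet : IsUnit A'.det := by
    simp only [A']
    rw [det_fromBlocks_zero₂₁, det_diagonal, Fintype.prod_sum_type]
    refine hA.mul ?_
    simp only [σ, Sum.elim_inl, Sum.elim_inr, Finset.prod_const]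
    exact (isUnit_one.pow _).mul (isUnit_one.neg.pow _)
  have hdet0 : A'.det ≠ 0 := hdet.ne_zero
  let P' : Matrix (ι ⊕ (Fin k ⊕ Fin k)) (ι ⊕ (Fin k ⊕ Fin k)) ℚ := fromBlocks P 0 0 1
  let d' : ι ⊕ (Fin k ⊕ Fin k) → ℚ := Sum.elim d (fun i => (σ i : ℚ))
  have hP' : P'ᵀ * A'.map (fun z : ℤ => (z : ℚ)) * P' = diagonal d' := by
    simp only [P', A', fromBlocks_map, fromBlocks_transpose, fromBlocks_multiply]
    simp [hP, d', diagonal_map, ← fromBlocks_diagonal]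
  have hd' : ∀ i, d' i ≠ 0 := by
    rintro (i | i | i)
    · exact hd i
    · simp [d', σ]
    · simp [d', σ]
  have hsum : ∑ i, cl (d' i) = ∑ i, cl (τ i : ℚ) := by
    rw [← hcl, Fintype.sum_sum_type, Fintype.sum_sum_type]
    simp [d', σ, smul_add]
  obtain ⟨⟨e⟩, Q, hQ⟩ := cl_sum_eq_iff d' (fun i => (τ i : ℚ)) hd'
    (fun i => by exact_mod_cast hτ i) hsum
  obtain ⟨b, hb⟩ := orth_basis A' (P' * Q) e (fun i => (τ i : ℚ)) (fun i => by exact_mod_cast hτ i) (by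
    rw [← hQ, ← hP', transpose_mul]; simp only [Matrix.mul_assoc])
  exact excl (bf_nondeg A' hdet0) (bf_symm A' hs') zlat_lat (zlat_self A' hs' hdet) b τ hτ hb i0 p a hp
    h0 ha hx

lemma clear_den {r : ℕ} (τ : Fin r → ℤ) (hτ : ∀ i, τ i ≠ 0) (x : Fin r → ℤ) :
    ∃ E : ℤ, ((∏ i, τ i : ℤ) : ℚ) * ∑ i, (x i : ℚ) ^ 2 / τ i = E := by
  have : ((∏ i, τ i : ℤ) : ℚ) * ∑ i, (x i : ℚ) ^ 2 / τ i ∈ ZZ := by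
    rw [Finset.mul_sum]
    refine Subring.sum_mem _ fun i _ => ?_
    rw [← Finset.mul_prod_erase _ _ (Finset.mem_univ i)]
    refine mem_ZZ.2 ⟨(∏ j ∈ Finset.univ.erase i, τ j) * x i ^ 2, ?_⟩
    have : (τ i : ℚ) ≠ 0 := by exact_mod_cast hτ i
    push_cast
    field_simp
  obtain ⟨z, hz⟩ := mem_ZZ.1 this
  exact ⟨z, hz.symm⟩

lemma cond_two {p : ℕ} [hp : Fact p.Prime] {r : ℕ} (τ : Fin r → ℤ) (hτ : ∀ i, Smooth p (τ i))
    (x : Fin r → ℤ) (a b y z : ℤ) (ha : a ≠ 0) (hb : b ≠ 0)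
    (h : (y : ℚ) ^ 2 / (p * a : ℤ) + ((z : ℚ) ^ 2 / (p * b : ℤ) + ∑ i, (x i : ℚ) ^ 2 / τ i) ∈ ZZ) :
    (p : ℤ) ∣ b * y ^ 2 + a * z ^ 2 := by
  have hp' := hp.out
  have hpi := Nat.prime_iff_prime_int.1 hp'
  obtain ⟨E, hE⟩ := clear_den τ (fun i => (hτ i).1) x
  obtain ⟨w, hw⟩ := mem_ZZ.1 h
  set D := ∏ i, τ i with hD
  have hDp : ¬ (p : ℤ) ∣ D := by
    intro hd
    obtain ⟨i, -, hi⟩ := (Prime.dvd_finset_prod_iff hpi _).1 hd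
    exact (hτ i).not_dvd hp' hi
  have e : D * (b * y ^ 2 + a * z ^ 2) = p * (a * b * (D * w - E)) := by
    have hpq : (p : ℚ) ≠ 0 := by exact_mod_cast hp'.ne_zero
    have haq : (a : ℚ) ≠ 0 := by exact_mod_cast ha
    have hbq : (b : ℚ) ≠ 0 := by exact_mod_cast hb
    have : (D : ℚ) * (b * y ^ 2 + a * z ^ 2) = p * (a * b * (D * w - E)) := by
      rw [← hE, hw]
      push_cast
      field_simp
      ring
    exact_mod_cast this
  exact (hpi.dvd_or_dvd ⟨_, e⟩).resolve_left hDp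

lemma cond_one {p : ℕ} [hp : Fact p.Prime] {r : ℕ} (τ : Fin r → ℤ) (hτ : ∀ i, Smooth p (τ i))
    (x : Fin r → ℤ) (a y : ℤ) (ha : a ≠ 0)
    (h : (y : ℚ) ^ 2 / (p * a : ℤ) + ∑ i, (x i : ℚ) ^ 2 / τ i ∈ ZZ) :
    (p : ℤ) ∣ y := by
  have hpi := Nat.prime_iff_prime_int.1 hp.out
  have := cond_two τ hτ x a 1 y 0 ha one_ne_zero (by simpa using h)
  simp at this
  exact hpi.dvd_of_dvd_pow this

lemma descend_prime {p : ℕ} [hp : Fact p.Prime] {ι : Type*} [Fintype ι] [DecidableEq ι]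
    (A : Matrix ι ι ℤ) (hs : A.IsSymm)
    (hA : IsUnit A.det) (P : Matrix ι ι ℚ) (d : ι → ℚ) (hd : ∀ i, d i ≠ 0)
    (hP : Pᵀ * A.map (fun z : ℤ => (z : ℚ)) * P = diagonal d)
    (hx : ∑ i, cl (d i) ∈ SS (p + 1)) : ∑ i, cl (d i) ∈ SS p := by
  have hp' := hp.out
  have hpi := Nat.prime_iff_prime_int.1 hp'
  have hpz : (p : ℤ) ≠ 0 := by exact_mod_cast hp'.ne_zero
  rcases SS_succ_NF hx with h | ⟨a, ha, h⟩ | ⟨a, b, ha, hb, hab, h⟩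
  · exact (QuotientAddGroup.eq_zero_iff _).1 h
  · exfalso
    have Sa := smooth_val ha
    have h' : ∑ i, cl (d i) - cl ((p * (a.val : ℤ) : ℤ) : ℚ) ∈ SS p := by
      rw [← QuotientAddGroup.eq_zero_iff, QuotientAddGroup.mk_sub, h, sub_eq_zero]
      unfold FF ff
      push_cast; rfl
    obtain ⟨k, r, τ, h1, h2⟩ := SS_rep h'
    refine unimod_excl A hs hA P d hd hP k (κ := Option (Fin r))
      (fun o => o.elim ((p : ℤ) * (a.val : ℤ)) τ) ?_ ?_ none p (a.val : ℤ) hpz rfl (Sa.not_dvd hp') ?_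
    · rintro (_ | i)
      · exact mul_ne_zero hpz Sa.1
      · exact (h1 i).1
    · rw [Fintype.sum_option]
      simp only [Option.elim_none, Option.elim_some, ← h2]
      abel
    · intro x hx
      rw [Fintype.sum_option] at hx
      exact cond_one τ h1 _ _ _ Sa.1 hx
  · exfalso
    have Sa := smooth_val ha
    have Sb := smooth_val hb
    have h' : ∑ i, cl (d i) - cl ((p * (a.val : ℤ) : ℤ) : ℚ) - cl ((p * (b.val : ℤ) : ℤ) : ℚ) ∈ SS p := by
      rw [← QuotientAddGroup.eq_zero_iff, QuotientAddGroup.mk_sub, QuotientAddGroup.mk_sub, h, sub_sub,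
        sub_eq_zero]
      unfold FF ff
      push_cast; rfl
    obtain ⟨k, r, τ, h1, h2⟩ := SS_rep h'
    refine unimod_excl A hs hA P d hd hP k (κ := Option (Option (Fin r)))
      (fun o => o.elim ((p : ℤ) * (a.val : ℤ)) (fun o => o.elim ((p : ℤ) * (b.val : ℤ)) τ))
      ?_ ?_ none p (a.val : ℤ) hpz rfl (Sa.not_dvd hp') ?_
    · rintro (_ | _ | i)
      · exact mul_ne_zero hpz Sa.1
      · exact mul_ne_zero hpz Sb.1
      · exact (h1 i).1
    · rw [Fintype.sum_option, Fintype.sum_option]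
      simp only [Option.elim_none, Option.elim_some, ← h2]
      abel
    · intro x hx
      rw [Fintype.sum_option, Fintype.sum_option] at hx
      have := cond_two τ h1 _ _ _ _ _ Sa.1 Sb.1 hx
      by_contra hnd
      apply hab
      set y := x none
      set z := x (some none)
      have e := (ZMod.intCast_zmod_eq_zero_iff_dvd _ p).2 this
      push_cast at e
      rw [ZMod.natCast_zmod_val, ZMod.natCast_zmod_val] at e
      have hy : (y : ZMod p) ≠ 0 := fun h => hnd ((ZMod.intCast_zmod_eq_zero_iff_dvd _ p).1 h)
      refine ⟨a * z / y, ?_⟩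
      field_simp
      linear_combination (-1) * e

lemma descend {ι : Type*} [Fintype ι] [DecidableEq ι]
    (A : Matrix ι ι ℤ) (hs : A.IsSymm)
    (hA : IsUnit A.det) (P : Matrix ι ι ℚ) (d : ι → ℚ) (hd : ∀ i, d i ≠ 0)
    (hP : Pᵀ * A.map (fun z : ℤ => (z : ℚ)) * P = diagonal d) (N : ℕ) 
    (hx : ∑ i, cl (d i) ∈ SS (N + 2)) : ∑ i, cl (d i) ∈ SS 2 := by
  induction N with
  | zero => exact hx
  | succ N ih =>
    apply ih
    by_cases hp : (N + 2).Prime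
    · have : Fact (N + 2).Prime := ⟨hp⟩
      apply descend_prime A hs hA P d hd hP
      have : N + 1 + 2 = N + 2 + 1 := by ring
      rwa [this] at hx
    · refine AddSubgroup.closure_mono ?_ hx
      rintro _ ⟨u, hu, rfl⟩
      refine ⟨u, ⟨hu.1, fun q hq hd => ?_⟩, rfl⟩
      have h1 := hu.2 q hq hd
      have : q ≠ N + 2 := by rintro rfl; exact hp hq
      omega

lemma SS_mono {N N' : ℕ} (h : N ≤ N') : SS N ≤ SS N' := by
  refine AddSubgroup.closure_mono ?_
  rintro _ ⟨u, hu, rfl⟩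
  exact ⟨u, ⟨hu.1, fun q hq hd => (hu.2 q hq hd).trans_le h⟩, rfl⟩

lemma cl_mem_SS (q : ℚ) : ∃ N, cl q ∈ SS N := by
  by_cases h : q = 0
  · exact ⟨0, by rw [h]; simp [cl]⟩
  · have hq : q.num * q.den ≠ 0 := mul_ne_zero (Rat.num_ne_zero.2 h) (by simp)
    have e : cl ((q.num * q.den : ℤ) : ℚ) = cl q := by
      have : ((q.num * q.den : ℤ) : ℚ) = q * (q.den : ℚ) ^ 2 := by
        push_cast
        rw [pow_two, ← mul_assoc, Rat.mul_den_eq_num]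
      rw [this, cl_mul_sq _ _ (by simp)]
    rw [← e]
    refine ⟨(q.num * q.den).natAbs + 1, SS.mem (Smooth.of_lt hq ?_)⟩
    push_cast
    omega

theorem milnor {ι : Type*} [Fintype ι] [DecidableEq ι]
    (A : Matrix ι ι ℤ) (hs : A.IsSymm)
    (hA : IsUnit A.det) (P : Matrix ι ι ℚ) (d : ι → ℚ) (hd : ∀ i, d i ≠ 0)
    (hP : Pᵀ * A.map (fun z : ℤ => (z : ℚ)) * P = diagonal d) :
    ∑ i, cl (d i) = Fintype.card {i // 0 < d i} • cl 1 + Fintype.card {i // d i < 0} • cl (-1) := by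
  have h2 : ∑ i, cl (d i) ∈ SS 2 := by
    choose N hN using cl_mem_SS
    refine descend A hs hA P d hd hP (∑ i, N (d i)) (AddSubgroup.sum_mem _ fun i _ => ?_)
    refine SS_mono ?_ (hN (d i))
    have := Finset.single_le_sum (f := fun i => N (d i)) (fun _ _ => Nat.zero_le _) (Finset.mem_univ i)
    omega
  obtain ⟨k, r, τ, h1, h3⟩ := SS_rep h2
  have hτ : ∀ i, τ i = 1 ∨ τ i = -1 := by
    intro i
    obtain ⟨h0, h⟩ := h1 i
    have : (τ i).natAbs = 1 := by
      by_contra hne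
      obtain ⟨q, hq, hd⟩ := Nat.exists_prime_and_dvd hne
      have := h q hq (Int.natCast_dvd.2 hd)
      have := hq.two_le
      omega
    omega
  have hτ0 : ∀ i, (τ i : ℚ) ≠ 0 := fun i => by exact_mod_cast (h1 i).1
  let σ : Fin k ⊕ Fin k → ℤ := Sum.elim (fun _ => 1) (fun _ => -1)
  let d' : ι ⊕ (Fin k ⊕ Fin k) → ℚ := Sum.elim d (fun i => (σ i : ℚ))
  have hd' : ∀ i, d' i ≠ 0 := by
    rintro (i | i | i)
    · exact hd i
    · simp [d', σ]
    · simp [d', σ]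
  have hsum : ∑ i, cl (d' i) = ∑ i, cl (τ i : ℚ) := by
    rw [← h3, Fintype.sum_sum_type, Fintype.sum_sum_type]
    simp [d', σ, smul_add]
  obtain ⟨c1, c2⟩ := sign_count d' (fun i => (τ i : ℚ)) hd' hτ0 hsum
  have t1 : Fintype.card {i // 0 < d' i} = Fintype.card {i // 0 < d i} + k := by
    simp only [Fintype.card_subtype, Finset.card_filter, Fintype.sum_sum_type, d', σ]
    norm_num [-Finset.sum_boole]
    exact Finset.sum_congr rfl fun i _ => by congr
  have t2 : Fintype.card {i // d' i < 0} = Fintype.card {i // d i < 0} + k := by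
    simp only [Fintype.card_subtype, Finset.card_filter, Fintype.sum_sum_type, d', σ]
    norm_num [-Finset.sum_boole]
    exact Finset.sum_congr rfl fun i _ => by congr
  have t3 : ∑ i, cl (τ i : ℚ) = Fintype.card {i // 0 < (τ i : ℚ)} • cl 1
      + Fintype.card {i // (τ i : ℚ) < 0} • cl (-1) := by
    simp only [Fintype.card_subtype, Finset.card_filter, Finset.sum_smul, ← Finset.sum_add_distrib]
    refine Finset.sum_congr rfl fun i _ => ?_
    rcases hτ i with h | h <;> rw [h] <;> simp
  rw [t3, ← c1, ← c2, t1, t2] at h3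
  have : ∑ i, cl (d i) + k • (cl 1 + cl (-1)) =
    (Fintype.card {i // 0 < d i} • cl 1 + Fintype.card {i // d i < 0} • cl (-1)) + k • (cl 1 + cl (-1)) := by
    rw [h3, add_smul, add_smul, smul_add]; abel
  exact add_right_cancel this

lemma even_span {V : Type*} [AddCommGroup V] [Module ℚ V]
    {B : LinearMap.BilinForm ℚ V} (hs : B.IsSymm) {κ : Type*} (b : κ → V)
    (hInt : ∀ i j, B (b i) (b j) ∈ ZZ) (hev : ∀ i, ∃ z : ℤ, B (b i) (b i) = 2 * z) :
    (∀ x ∈ Submodule.span ℤ (Set.range b), ∀ y ∈ Submodule.span ℤ (Set.range b), B x y ∈ ZZ) ∧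
    ∀ x ∈ Submodule.span ℤ (Set.range b), ∃ z : ℤ, B x x = 2 * z := by
  have sy : ∀ a b, B a b = B b a := fun a b => by simpa using hs.eq a b
  have h1 : ∀ x ∈ Submodule.span ℤ (Set.range b), ∀ y ∈ Submodule.span ℤ (Set.range b), B x y ∈ ZZ := by
    intro x hx y hy
    induction hx using Submodule.span_induction with
    | mem x hx =>
      obtain ⟨i, rfl⟩ := hx
      induction hy using Submodule.span_induction with
      | mem y hy => obtain ⟨j, rfl⟩ := hy; exact hInt i j
      | zero => simp [zero_mem]
      | add u v _ _ hu hv => rw [map_add]; exact add_mem hu hv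
      | smul k u _ hu => rw [map_zsmul]; exact zsmul_mem hu k
    | zero => simp [zero_mem]
    | add u v _ _ hu hv => rw [map_add, LinearMap.add_apply]; exact add_mem hu hv
    | smul k u _ hu => rw [map_zsmul, LinearMap.smul_apply]; exact zsmul_mem hu k
  refine ⟨h1, fun x hx => ?_⟩
  induction hx using Submodule.span_induction with
  | mem x hx => obtain ⟨i, rfl⟩ := hx; exact hev i
  | zero => exact ⟨0, by simp⟩
  | add u v hu' hv' hu hv =>
    obtain ⟨z, hz⟩ := hu
    obtain ⟨w, hw⟩ := hv
    obtain ⟨t, ht⟩ := mem_ZZ.1 (h1 u hu' v hv')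
    refine ⟨z + w + t, ?_⟩
    simp only [map_add, LinearMap.add_apply, hz, hw, sy v u, ← ht]
    push_cast; ring
  | smul k u _ hu =>
    obtain ⟨z, hz⟩ := hu
    refine ⟨k ^ 2 * z, ?_⟩
    rw [map_zsmul, map_zsmul, LinearMap.smul_apply, hz]
    simp
    ring

lemma zlat_EU {n : ℕ} (G : Matrix (Fin n) (Fin n) ℤ) (hs : G.IsSymm) (he : ∀ i, 2 ∣ G i i)
    (hu : IsUnit G.det) : EU (bf G) (zlat (Fin n)) := by
  refine ⟨zlat_lat, zlat_self G hs hu, ?_⟩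
  rw [zlat_eq]
  have hb : ∀ i j, bf G (Pi.basisFun ℚ (Fin n) i) (Pi.basisFun ℚ (Fin n) j) = G i j := by
    intro i j
    rw [bf_apply]; simp
  refine (even_span (bf_symm G hs) _ (fun i j => by rw [hb]; exact int_mem_ZZ _) fun i => ?_).2
  obtain ⟨z, hz⟩ := he i
  exact ⟨z, by rw [hb, hz]; push_cast; ring⟩

lemma realize {n : ℕ} {κ : Type*} [Fintype κ] [DecidableEq κ]
    (G : Matrix (Fin n) (Fin n) ℤ) (hs : G.IsSymm) (he : ∀ i, 2 ∣ G i i) (hu : IsUnit G.det)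
    (P : Matrix (Fin n) (Fin n) ℚ) (d : Fin n → ℚ) (hd : ∀ i, d i ≠ 0)
    (hP : Pᵀ * G.map (fun z : ℤ => (z : ℚ)) * P = diagonal d)
    (N : Matrix κ κ ℤ) (hNe : ∀ i, 2 ∣ N i i) (R : Matrix κ κ ℚ)
    (t : κ → ℚ) (ht : ∀ i, t i ≠ 0) (hR : Rᵀ * N.map (fun z : ℤ => (z : ℚ)) * R = diagonal t)
    (hcl : ∑ i, cl (d i) = ∑ i, cl (t i)) (i0 : κ) (h0 : N i0 i0 = 0) :
    ∃ Y : Matrix (Fin n) κ ℤ, Yᵀ * G * Y = N := by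
  obtain ⟨⟨e⟩, Q, hQ⟩ := cl_sum_eq_iff d t hd ht hcl
  have hRd := det_ne_of_congr _ _ (det_diag_ne t ht) R hR
  have hRu : IsUnit R.det := isUnit_iff_ne_zero.2 hRd
  set W : Matrix (Fin n) κ ℚ := P * Q * R⁻¹ with hW
  have hWN : Wᵀ * G.map (fun z : ℤ => (z : ℚ)) * W = N.map (fun z : ℤ => (z : ℚ)) := by
    have h1 : (P * Q)ᵀ * G.map (fun z : ℤ => (z : ℚ)) * (P * Q)
        = Rᵀ * N.map (fun z : ℤ => (z : ℚ)) * R := by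
      rw [hR, ← hQ, ← hP, transpose_mul]; simp only [Matrix.mul_assoc]
    have h2 : R * R⁻¹ = 1 := mul_nonsing_inv _ hRu
    have h3 : R⁻¹ᵀ * Rᵀ = 1 := by rw [← transpose_mul, h2, transpose_one]
    calc Wᵀ * G.map (fun z : ℤ => (z : ℚ)) * W
        = R⁻¹ᵀ * ((P * Q)ᵀ * G.map (fun z : ℤ => (z : ℚ)) * (P * Q)) * R⁻¹ := by
          rw [hW, transpose_mul (P * Q)]; simp only [Matrix.mul_assoc]
      _ = (R⁻¹ᵀ * Rᵀ) * N.map (fun z : ℤ => (z : ℚ)) * (R * R⁻¹) := by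
          rw [h1]; simp only [Matrix.mul_assoc]
      _ = _ := by rw [h2, h3, Matrix.one_mul, Matrix.mul_one]
  have hNd : (N.map (fun z : ℤ => (z : ℚ))).det ≠ 0 := by
    intro h
    have := congrArg det hR
    rw [det_mul, det_mul, h] at this
    exact det_diag_ne t ht (by rw [← this]; ring)
  -- the basis of columns
  have hW' : (W.submatrix id e)ᵀ * G.map (fun z : ℤ => (z : ℚ)) * (W.submatrix id e)
      = (N.map (fun z : ℤ => (z : ℚ))).submatrix e e := by
    rw [← hWN]
    ext i j
    simp [Matrix.mul_apply, submatrix_apply]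
  have hdW : (W.submatrix id e).det ≠ 0 := by
    refine det_ne_of_congr _ _ ?_ _ hW'
    rw [det_submatrix_equiv_self]; exact hNd
  let b : Module.Basis κ ℚ (Fin n → ℚ) := (colBasis _ hdW).reindex e
  have hb : ∀ i j, bf G (b i) (b j) = N i j := by
    intro i j
    simp only [b]
    rw [Module.Basis.reindex_apply, Module.Basis.reindex_apply, colBasis_apply, colBasis_apply, bf_col,
      hW']
    simp
  have hB := bf_nondeg G hu.ne_zero
  have hS := bf_symm G hs
  obtain ⟨e1, e2⟩ := even_span hS b (fun i j => by rw [hb]; exact int_mem_ZZ _) (fun i => by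
    obtain ⟨z, hz⟩ := hNe i
    exact ⟨z, by rw [hb, hz]; push_cast; ring⟩)
  have hEU := zlat_EU G hs he hu
  obtain ⟨Λ, hΛ, hle⟩ := EU.over hB hS hEU _ (isLattice_span b)
    (fun x hx => (mem_dl _).2 fun y hy => e1 x hx y hy) e2
  obtain ⟨g, hg, hgL⟩ := EU.carries hB hS hΛ hEU (b.ne_zero i0) (by rw [hb, h0]; simp)
  have hY : ∀ k i, ∃ z : ℤ, (z : ℚ) = g (b k) i := fun k i =>
    mem_ZZ.1 (hgL _ (hle (Submodule.subset_span ⟨k, rfl⟩)) i)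
  choose y hy using hY
  refine ⟨Matrix.of fun i k => y k i, ?_⟩
  ext j k
  have := hg (b j) (b k)
  rw [hb, bf_apply] at this
  have hq : ((((Matrix.of fun i k => y k i)ᵀ * G * (Matrix.of fun i k => y k i)) j k : ℤ) : ℚ) = (N j k : ℤ) := by
    rw [← this, Matrix.mul_assoc]
    simp only [Matrix.mul_apply, dotProduct, mulVec, transpose_apply, of_apply, Matrix.map_apply,
      ← hy]
    push_cast
    rfl
  exact_mod_cast hq

lemma pair_cl (γ c y r : ℚ) (hγ : γ ≠ 0) (hc : c ≠ 0) (hy : y ≠ 0) (h : γ * y ^ 2 = c + r ^ 2) :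
    cl γ + cl (c * γ) = cl 1 + cl c := by
  by_cases hr : r = 0
  · rw [hr] at h
    have hc' : c = γ * y ^ 2 := by rw [h]; ring
    have e : c * γ = 1 * (γ * y) ^ 2 := by rw [hc']; ring
    rw [e, cl_mul_sq _ _ (mul_ne_zero hγ hy), hc', cl_mul_sq _ _ hy, add_comm]
  · have h1 := cl_add c (r ^ 2) hc (pow_ne_zero _ hr) (by rw [← h]; exact mul_ne_zero hγ (pow_ne_zero _ hy))
    rw [← h, cl_mul_sq _ _ hy] at h1
    have e1 : r ^ 2 = 1 * r ^ 2 := by ring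
    have e2 : c * r ^ 2 * (γ * y ^ 2) = (c * γ) * (r * y) ^ 2 := by ring
    rw [e2, cl_mul_sq _ _ (mul_ne_zero hr hy), e1, cl_mul_sq _ _ hr] at h1
    rw [← h1, add_comm]

lemma common_den {ι : Type*} [Fintype ι] [DecidableEq ι] (X : ι → ℚ) :
    ∃ N : ℕ, 0 < N ∧ ∀ i, ∃ z : ℤ, (N : ℚ) * X i = z := by
  refine ⟨∏ i, (X i).den, Finset.prod_pos fun i _ => (X i).den_pos, fun i => ?_⟩
  refine ⟨(∏ j ∈ Finset.univ.erase i, ((X j).den : ℤ)) * (X i).num, ?_⟩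
  rw [← Finset.mul_prod_erase _ _ (Finset.mem_univ i)]
  push_cast
  rw [← Rat.mul_den_eq_num (X i)]
  ring

lemma diag_block {ι : Type*} [Fintype ι] [DecidableEq ι] (M F P : Matrix ι ι ℚ) (g w : ι → ℚ)
    (hg : ∀ i, g i ≠ 0) (hM : M.IsSymm) (hPd : P.det ≠ 0) (hP : Pᵀ * M * P = diagonal g)
    (hF : F = P * diagonal (fun i => w i + (g i)⁻¹) * Pᵀ) :
    ∃ R : Matrix (ι ⊕ ι) (ι ⊕ ι) ℚ, Rᵀ * fromBlocks M 1 1 F * R = diagonal (Sum.elim g w) := by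
  have hu : IsUnit P.det := isUnit_iff_ne_zero.2 hPd
  have h1 : P * P⁻¹ = 1 := mul_nonsing_inv _ hu
  have h2 : P⁻¹ * P = 1 := nonsing_inv_mul _ hu
  have h3 : Pᵀ * P⁻¹ᵀ = 1 := by rw [← transpose_mul, h2, transpose_one]
  have h4 : P⁻¹ᵀ * Pᵀ = 1 := by rw [← transpose_mul, h1, transpose_one]
  set D := diagonal (fun i => (g i)⁻¹) with hD
  have hgD : diagonal g * D = 1 := by
    rw [hD, diagonal_mul_diagonal, ← diagonal_one]
    congr 1; ext i; exact mul_inv_cancel₀ (hg i)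
  have hDg : D * diagonal g = 1 := by
    rw [hD, diagonal_mul_diagonal, ← diagonal_one]
    congr 1; ext i; exact inv_mul_cancel₀ (hg i)
  have hDt : Dᵀ = D := diagonal_transpose _
  refine ⟨fromBlocks P (-(P * D)) 0 P⁻¹ᵀ, ?_⟩
  have a1 : Pᵀ * (M * (P * D)) = 1 := by
    rw [← hgD, ← hP]; simp only [Matrix.mul_assoc]
  have a2 : P⁻¹ * (F * P⁻¹ᵀ) = diagonal (fun i => w i + (g i)⁻¹) := by
    rw [hF]
    calc _ = (P⁻¹ * P) * diagonal (fun i => w i + (g i)⁻¹) * (Pᵀ * P⁻¹ᵀ) := by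
          simp only [Matrix.mul_assoc]
      _ = _ := by rw [h2, h3, Matrix.one_mul, Matrix.mul_one]
  have a3 : P⁻¹ * (P * D) = D := by rw [← Matrix.mul_assoc, h2, Matrix.one_mul]
  have a4 : Pᵀ * (M * P) = diagonal g := by rw [← Matrix.mul_assoc, hP]
  rw [Matrix.mul_assoc, fromBlocks_transpose, fromBlocks_multiply, fromBlocks_multiply, ← fromBlocks_diagonal]
  congr 1
  · simp [a4]
  · simp [Matrix.mul_add, a1, h3]
  · simp [a4, hDt, Matrix.mul_assoc, hDg, h2]
  · simp only [transpose_neg, transpose_mul, hDt, transpose_transpose, Matrix.mul_add, Matrix.mul_neg,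
      Matrix.neg_mul, Matrix.one_mul, Matrix.mul_assoc, a1, h3, Matrix.mul_one, a2, a3]
    have : diagonal (fun i => w i + (g i)⁻¹) = diagonal w + D := by
      rw [hD, diagonal_add]
    rw [this]
    abel

lemma cast_help (γ : ℕ) (y c r : ℤ) (h : (γ : ℤ) * y ^ 2 = c + r ^ 2) :
    (γ : ℚ) * (y : ℚ) ^ 2 = c + (r : ℚ) ^ 2 := by exact_mod_cast h

lemma cast_help2 (γ : ℕ) (c : ℤ) (h : (γ : ℤ) = c) : (γ : ℚ) = c := by exact_mod_cast h

lemma shift_cl (s g c : ℚ) (hs : s = 1 ∨ s = -1) (hg : 0 < s * g) (hc : 0 < c) (y r : ℚ)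
    (hy : y ≠ 0) (h : s * g * y ^ 2 = c + r ^ 2) :
    cl g + cl (c / g) = if s = 1 then cl 1 + cl c
      else (cl 1 + cl (-1)) + (cl 1 + cl (-1)) - (cl 1 + cl c) := by
  have hg0 : g ≠ 0 := by rintro rfl; simp at hg
  have e : cl (c / g) = cl (c * g) := by
    have : c * g = (c / g) * g ^ 2 := by field_simp
    rw [this, cl_mul_sq _ _ hg0]
  rw [e]
  rcases hs with rfl | rfl
  · rw [if_pos rfl]
    exact pair_cl g c y r hg0 hc.ne' hy (by rw [← h]; ring)
  · rw [if_neg (by norm_num)]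
    have h1 := pair_cl (-g) c y r (neg_ne_zero.2 hg0) hc.ne' hy (by rw [← h]; ring)
    have h2 := cl_neg g hg0
    have h3 := cl_neg (c * g) (mul_ne_zero hc.ne' hg0)
    have h4 : c * -g = -(c * g) := by ring
    rw [h4] at h1
    rw [← h1]
    nth_rewrite 1 [← h2]
    rw [← h3]
    abel

lemma main_sq {n : ℕ} {ι : Type*} [Fintype ι] [DecidableEq ι]
    (G : Matrix (Fin n) (Fin n) ℤ) (hs : G.IsSymm) (he : ∀ i, 2 ∣ G i i) (hu : IsUnit G.det)
    (P : Matrix (Fin n) (Fin n) ℚ) (d : Fin n → ℚ) (hd : ∀ i, d i ≠ 0)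
    (hP : Pᵀ * G.map (fun z : ℤ => (z : ℚ)) * P = diagonal d)
    (M : Matrix ι ι ℤ) (hM : M.IsSymm) (hMe : ∀ i, 2 ∣ M i i)
    (Q : Matrix ι ι ℚ) (hQd : Q.det ≠ 0) (g : ι → ℚ) (hg : ∀ i, g i ≠ 0)
    (hQ : Qᵀ * M.map (fun z : ℤ => (z : ℚ)) * Q = diagonal g)
    (s : ℚ) (hs1 : s = 1 ∨ s = -1) (E : Finset ι) (k : ℕ) (hk : E.card = 4 * k)
    (hE : ∀ i ∈ E, 0 < s * g i)
    (hcl : ∑ i, cl (d i) + (4 * k) • (cl 1 + cl (-1))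
      = (Fintype.card ι + 1) • (cl 1 + cl (-1)) + (8 * k) • cl s) :
    ∃ (F : Matrix ι ι ℤ) (Y : Matrix (Fin n) (ι ⊕ ι) ℤ), Yᵀ * G * Y = fromBlocks M 1 1 F := by
  set X : Matrix ι ι ℚ := Q * diagonal (fun i => if i ∈ E then (g i)⁻¹ else 0) * Qᵀ with hX
  have hXs : ∀ i j, X i j = X j i := by
    have : Xᵀ = X := by
      rw [hX]; simp only [transpose_mul, transpose_transpose, diagonal_transpose, Matrix.mul_assoc]
    intro i j
    conv_lhs => rw [← this]
    rfl
  obtain ⟨N, hN, hz⟩ := common_den (fun p : ι × ι => X p.1 p.2)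
  choose z hz using hz
  have hγ : ∀ i ∈ E, s * g i * ((g i).den : ℚ) ^ 2 = (((g i).num * (g i).den).natAbs : ℕ) := by
    intro i hi
    have h1 : g i * ((g i).den : ℚ) ^ 2 = (((g i).num * (g i).den : ℤ) : ℚ) := by
      push_cast
      rw [pow_two, ← mul_assoc, Rat.mul_den_eq_num]
    rw [mul_assoc, h1]
    have h2 : ((((g i).num * (g i).den).natAbs : ℕ) : ℚ) = |(((g i).num * (g i).den : ℤ) : ℚ)| := by
      rw [← Int.cast_abs, Int.abs_eq_natAbs]
      simp
    rw [h2]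
    have h3 : 0 < s * (((g i).num * (g i).den : ℤ) : ℚ) := by
      rw [← h1, ← mul_assoc]
      have := hE i hi
      have h4 : (0 : ℚ) < ((g i).den : ℚ) ^ 2 := by
        have := (g i).den_pos
        positivity
      exact mul_pos this h4
    rcases hs1 with rfl | rfl
    · rw [one_mul] at h3 ⊢; rw [abs_of_pos h3]
    · rw [neg_one_mul] at h3 ⊢; rw [abs_of_neg (by linarith)]
  obtain ⟨c, hc, ⟨q, hq⟩, hrs⟩ := norm_trick (E.toList.map fun i => ((g i).num * (g i).den).natAbs)
    (by
      intro a ha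
      rw [List.mem_map] at ha
      obtain ⟨i, hi, rfl⟩ := ha
      apply Int.natAbs_pos.2
      exact mul_ne_zero (Rat.num_ne_zero.2 (hg i)) (by simp)) (2 * N) (by omega)
  have hcq : (0 : ℚ) < c := by exact_mod_cast hc
  let F : Matrix ι ι ℤ := Matrix.of fun i j => 2 * q * z (i, j)
  have hFX : F.map (fun z : ℤ => (z : ℚ)) = ((c : ℚ) + 1) • X := by
    ext i j
    have h1 := hz (i, j)
    simp only at h1
    have h2 : (c : ℚ) + 1 = 2 * N * q := by exact_mod_cast hq
    simp only [F, Matrix.map_apply, of_apply, Matrix.smul_apply, smul_eq_mul, h2]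
    push_cast
    rw [← h1]; ring
  let w : ι → ℚ := fun i => if i ∈ E then c / g i else -(g i)⁻¹
  have hw : ∀ i, w i ≠ 0 := by
    intro i
    simp only [w]
    split_ifs
    · exact div_ne_zero hcq.ne' (hg i)
    · exact neg_ne_zero.2 (inv_ne_zero (hg i))
  obtain ⟨R0, hR0⟩ := diag_block (M.map (fun z : ℤ => (z : ℚ))) (F.map (fun z : ℤ => (z : ℚ))) Q g w hg
    (by rw [IsSymm, ← transpose_map, hM.eq]) hQd hQ (by
      rw [hFX, hX, ← Matrix.smul_mul, ← Matrix.mul_smul, ← diagonal_smul]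
      congr 3
      ext i
      simp only [Pi.smul_apply, smul_eq_mul, w]
      split_ifs
      · field_simp
      · simp)
  let U : Matrix (Fin 2) (Fin 2) ℤ := !![0, 1; 1, 0]
  let RU : Matrix (Fin 2) (Fin 2) ℚ := !![1, 1; 1/2, -1/2]
  let N1 : Matrix ((ι ⊕ ι) ⊕ Fin 2) ((ι ⊕ ι) ⊕ Fin 2) ℤ := fromBlocks (fromBlocks M 1 1 F) 0 0 U
  let R : Matrix ((ι ⊕ ι) ⊕ Fin 2) ((ι ⊕ ι) ⊕ Fin 2) ℚ := fromBlocks R0 0 0 RU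
  let t : (ι ⊕ ι) ⊕ Fin 2 → ℚ := Sum.elim (Sum.elim g w) ![1, -1]
  have hUU : RUᵀ * U.map (fun z : ℤ => (z : ℚ)) * RU = diagonal ![1, -1] := by
    ext i j
    fin_cases i <;> fin_cases j <;> simp [RU, U, Matrix.mul_apply, Fin.sum_univ_two] <;> norm_num
  have hN0 : (fromBlocks M 1 1 F).map (fun z : ℤ => (z : ℚ))
      = fromBlocks (M.map (fun z : ℤ => (z : ℚ))) 1 1 (F.map (fun z : ℤ => (z : ℚ))) := by
    rw [fromBlocks_map]
    congr 1 <;> simp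
  have hR : Rᵀ * N1.map (fun z : ℤ => (z : ℚ)) * R = diagonal t := by
    simp only [R, N1]
    rw [fromBlocks_map, hN0, fromBlocks_transpose, fromBlocks_multiply, fromBlocks_multiply]
    simp only [t]
    rw [← fromBlocks_diagonal, ← hR0, ← hUU]
    congr 1 <;> simp
  have hclt : ∑ i, cl (d i) = ∑ i, cl (t i) := by
    apply add_right_cancel (b := (4 * k) • (cl 1 + cl (-1)))
    rw [hcl]
    simp only [t, Fintype.sum_sum_type, Sum.elim_inl, Sum.elim_inr, Fin.sum_univ_two]
    set h := cl 1 + cl (-1) with hh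
    set v := (if s = 1 then cl 1 + cl (c : ℚ) else h + h - (cl 1 + cl (c : ℚ))) with hv
    have hf : ∀ i, cl (g i) + cl (w i) + (if i ∈ E then h else 0) = h + if i ∈ E then v else 0 := by
      intro i
      by_cases hi : i ∈ E
      · simp only [w, if_pos hi]
        obtain ⟨r, y, hy, hry⟩ := hrs (((g i).num * (g i).den).natAbs)
          (List.mem_map.2 ⟨i, Finset.mem_toList.2 hi, rfl⟩)
        have hden : ((g i).den : ℚ) ≠ 0 := by simp
        have := shift_cl s (g i) c hs1 (hE i hi) hcq ((g i).den * y) r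
          (mul_ne_zero hden (by exact_mod_cast hy)) (by
            have e1 := hγ i hi
            have e2 := cast_help _ _ _ _ hry
            rw [← e2, ← e1]; ring)
        rw [this, hv, add_comm]
      · simp only [w, if_neg hi, add_zero]
        have e : -(g i)⁻¹ = -(g i) * ((g i)⁻¹) ^ 2 := by
          have := hg i
          field_simp
        rw [e, cl_mul_sq _ _ (inv_ne_zero (hg i)), cl_neg _ (hg i)]
    have hsum := Finset.sum_congr (rfl : (Finset.univ : Finset ι) = Finset.univ) fun i _ => hf i
    rw [Finset.sum_add_distrib, Finset.sum_add_distrib, Finset.sum_add_distrib, Finset.sum_const,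
      Finset.sum_ite_mem, Finset.sum_ite_mem, Finset.univ_inter, Finset.sum_const, Finset.sum_const,
      hk, Finset.card_univ] at hsum
    have h4 : 4 • cl (c : ℚ) = 4 • cl 1 := by
      have := cl_four c.natAbs (by omega)
      have e : ((c.natAbs : ℕ) : ℚ) = c := cast_help2 _ _ (by omega)
      rwa [e] at this
    have h8 : 4 • v = 8 • cl s := by
      rcases hs1 with rfl | rfl
      · rw [hv, if_pos rfl, smul_add, h4, ← add_smul]
      · rw [hv, if_neg (by norm_num), smul_sub, smul_add 4 (cl 1) (cl (c : ℚ)), h4, hh]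
        simp only [smul_add]
        abel
    have h9 : (4 * k) • v = (8 * k) • cl s := by
      rw [mul_comm 4 k, mul_smul, h8, ← mul_smul, mul_comm k 8]
    rw [h9] at hsum
    have e2 : cl (![1, -1] 0 : ℚ) + cl (![1, -1] 1 : ℚ) = h := rfl
    rw [e2, add_smul, one_smul]
    calc Fintype.card ι • h + h + (8 * k) • cl s = (Fintype.card ι • h + (8 * k) • cl s) + h := by abel
      _ = _ := by rw [← hsum]; abel
  obtain ⟨Y, hY⟩ := realize G hs he hu P d hd hP N1 (by
      rintro ((i | i) | i)
      · exact hMe i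
      · simp only [N1, fromBlocks_apply₁₁, fromBlocks_apply₂₂, F, of_apply]
        exact ⟨q * z (i, i), by ring⟩
      · fin_cases i <;> simp [N1, U]) R t (by
      rintro ((i | i) | i)
      · exact hg i
      · exact hw i
      · fin_cases i <;> simp [t]) hR hclt (Sum.inr 0) (by simp [N1, U])
  refine ⟨F, Y.submatrix id Sum.inl, ?_⟩
  have := congrArg (fun Z => Z.submatrix Sum.inl Sum.inl) hY
  rw [show (N1.submatrix Sum.inl Sum.inl) = fromBlocks M 1 1 F by ext i j; simp [N1]] at this
  rw [← this]
  ext i j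
  simp [Matrix.mul_apply, submatrix_apply]

lemma dvd_eight {n : ℕ} (G : Matrix (Fin n) (Fin n) ℤ) (hs : G.IsSymm) (he : ∀ i, 2 ∣ G i i)
    (hu : IsUnit G.det) (P : Matrix (Fin n) (Fin n) ℚ) (d : Fin n → ℚ) (hd : ∀ i, d i ≠ 0)
    (hP : Pᵀ * G.map (fun z : ℤ => (z : ℚ)) * P = diagonal d) (lp lm : ℕ)
    (hcl : ∑ i, cl (d i) = lp • cl 1 + lm • cl (-1)) : (8 : ℤ) ∣ lp - lm := by
  let σ : Fin lp ⊕ Fin lm → ℤ := Sum.elim (fun _ => 1) (fun _ => -1)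
  have hσ : ∀ i, σ i = 1 ∨ σ i = -1 := by
    rintro (i | i)
    · exact Or.inl rfl
    · exact Or.inr rfl
  have hσ0 : ∀ i, (σ i : ℚ) ≠ 0 := by
    intro i
    rcases hσ i with h | h <;> rw [h] <;> simp
  obtain ⟨⟨e⟩, Q, hQ⟩ := cl_sum_eq_iff d (fun i => (σ i : ℚ)) hd hσ0 (by
    rw [hcl, Fintype.sum_sum_type]; simp [σ])
  obtain ⟨b, hb⟩ := orth_basis G (P * Q) e (fun i => (σ i : ℚ)) hσ0 (by
    rw [← hQ, ← hP, transpose_mul]; simp only [Matrix.mul_assoc])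
  have := vdBlij (bf_nondeg G hu.ne_zero) (bf_symm G hs) (zlat_EU G hs he hu) b σ hσ hb
  rw [Fintype.sum_sum_type] at this
  simpa [σ, ← sub_eq_add_neg] using this

lemma primitive_of {m n : ℕ} (M : Matrix (Fin m) (Fin m) ℤ) (G : Matrix (Fin n) (Fin n) ℤ)
    (T F : Matrix (Fin n) (Fin m) ℤ) (h1 : Tᵀ * G * T = M) (h2 : Fᵀ * G * T = 1) :
    IsPrimitiveLatticeEmbedding M G T := by
  have hinv : ∀ x, (Fᵀ * G) *ᵥ (T *ᵥ x) = x := by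
    intro x
    rw [mulVec_mulVec, h2, one_mulVec]
  refine ⟨⟨fun x y h => ?_, fun x y => ?_⟩, ?_⟩
  · rw [← hinv x, ← hinv y]
    exact congrArg _ h
  · rw [← h1, mulVec_mulVec, dotProduct_comm, dotProduct_mulVec, ← mulVec_transpose, dotProduct_comm,
      mulVec_mulVec, Matrix.mul_assoc]
  · rintro v k hk ⟨x, hx⟩
    refine ⟨(Fᵀ * G) *ᵥ v, ?_⟩
    have e : x = k • ((Fᵀ * G) *ᵥ v) := by
      rw [← mulVec_smul, ← hx, hinv]
    have : k • (T *ᵥ ((Fᵀ * G) *ᵥ v)) = k • v := by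
      rw [← mulVec_smul, ← e, hx]
    ext i
    have := congrFun this i
    simp only [Pi.smul_apply, smul_eq_mul] at this
    exact mul_left_cancel₀ hk this

lemma final_step {m n : ℕ} (M : Matrix (Fin m) (Fin m) ℤ) (G : Matrix (Fin n) (Fin n) ℤ)
    (hMs : M.IsSymm) (hMe : ∀ i, 2 ∣ M i i)
    (hs : G.IsSymm) (he : ∀ i, 2 ∣ G i i) (hu : IsUnit G.det)
    (P : Matrix (Fin n) (Fin n) ℚ) (d : Fin n → ℚ) (hd : ∀ i, d i ≠ 0)
    (hP : Pᵀ * G.map (fun z : ℤ => (z : ℚ)) * P = diagonal d)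
    (Q : Matrix (Fin m) (Fin m) ℚ) (hQd : Q.det ≠ 0) (g : Fin m → ℚ) (hg : ∀ i, g i ≠ 0)
    (hQ : Qᵀ * M.map (fun z : ℤ => (z : ℚ)) * Q = diagonal g)
    (s : ℤ) (hs1 : s = 1 ∨ s = -1) (a k : ℕ) 
    (hcard : 4 * k ≤ Fintype.card {i // 0 < (s : ℚ) * g i} + a)
    (hcl : ∑ i, cl (d i) + (4 * k) • (cl 1 + cl (-1))
      = (m + a + 1) • (cl 1 + cl (-1)) + (8 * k) • cl (s : ℚ)) :
    ∃ T : Matrix (Fin n) (Fin m) ℤ, IsPrimitiveLatticeEmbedding M G T := by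
  let M' : Matrix (Fin m ⊕ Fin a) (Fin m ⊕ Fin a) ℤ := fromBlocks M 0 0 (diagonal fun _ => 2 * s)
  let Q' : Matrix (Fin m ⊕ Fin a) (Fin m ⊕ Fin a) ℚ := fromBlocks Q 0 0 1
  let g' : Fin m ⊕ Fin a → ℚ := Sum.elim g (fun _ => 2 * s)
  have hs0 : (s : ℚ) ≠ 0 := by rcases hs1 with rfl | rfl <;> norm_num
  have hss : (s : ℚ) * s = 1 := by rcases hs1 with rfl | rfl <;> norm_num
  have hQ' : Q'ᵀ * M'.map (fun z : ℤ => (z : ℚ)) * Q' = diagonal g' := by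
    simp only [Q', M', fromBlocks_map, fromBlocks_transpose, fromBlocks_multiply]
    simp [hQ, g', diagonal_map, ← fromBlocks_diagonal]
  have hc : 4 * k ≤ (Finset.univ.filter fun i => 0 < (s : ℚ) * g' i).card := by
    refine hcard.trans (le_of_eq ?_)
    have h2 : (0 : ℚ) < s * (2 * s) := by
      have : (s : ℚ) * (2 * s) = 2 := by linear_combination 2 * hss
      rw [this]; norm_num
    rw [Finset.card_filter, Fintype.sum_sum_type, Fintype.card_subtype, Finset.card_filter]
    simp only [g', Sum.elim_inl, Sum.elim_inr]
    refine congrArg₂ (· + ·) (Finset.sum_congr rfl fun i _ => by congr) ?_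
    refine Eq.trans ?_ (Finset.sum_congr rfl (fun _ _ => (if_pos h2).symm))
    simp
  obtain ⟨E, hE, hEk⟩ := Finset.exists_subset_card_eq hc
  obtain ⟨F, Y, hY⟩ := main_sq G hs he hu P d hd hP M'
    (IsSymm.fromBlocks hMs (by simp) (isSymm_diagonal _))
    (by
      rintro (i | i)
      · exact hMe i
      · simp [M']) Q' (by simp [Q', hQd]) g' (by
      rintro (i | i)
      · exact hg i
      · simp [g', hs0]) hQ' s (by rcases hs1 with rfl | rfl <;> simp) E k hEk
      (fun i hi => (Finset.mem_filter.1 (hE hi)).2) (by simpa using hcl)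
  have hcomp : ∀ i j, ∑ x, (∑ y, Y y i * G y x) * Y x j = fromBlocks M' 1 1 F i j := by
    intro i j
    rw [← hY]
    simp [Matrix.mul_apply]
  refine ⟨Y.submatrix id (fun i => Sum.inl (Sum.inl i)),
    primitive_of M G _ (Y.submatrix id (fun i => Sum.inr (Sum.inl i))) ?_ ?_⟩
  · ext i j
    simp [Matrix.mul_apply, hcomp, M']
  · ext i j
    simp [Matrix.mul_apply, hcomp, Matrix.one_apply]

theorem main_final {m n : ℕ} (tp tm lp lm : ℕ)
    (M : Matrix (Fin m) (Fin m) ℤ) (G : Matrix (Fin n) (Fin n) ℤ)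
    (hMsymm : M.IsSymm) (hMeven : ∀ i, 2 ∣ M i i) (hMnd : M.det ≠ 0)
    (hMsp : sigPlus M = tp) (hMsm : sigMinus M = tm)
    (hGsymm : G.IsSymm) (hGeven : ∀ i, 2 ∣ G i i) (hGuni : IsUnit G.det)
    (hGsp : sigPlus G = lp) (hGsm : sigMinus G = lm)
    (h1 : tp < lp) (h2 : tm < lm)
    (h3 : 2 * tp + 2 * tm + 2 ≤ lp + lm) :
    ∃ T : Matrix (Fin n) (Fin m) ℤ, IsPrimitiveLatticeEmbedding M G T := by
  have ed : ∀ {r : ℕ} (A : Matrix (Fin r) (Fin r) ℤ), A.IsSymm → A.det ≠ 0 →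
      ∃ (P : Matrix (Fin r) (Fin r) ℚ) (d : Fin r → ℚ), P.det ≠ 0 ∧ (∀ i, d i ≠ 0) ∧
      Pᵀ * A.map (fun z : ℤ => (z : ℚ)) * P = diagonal d := by
    intro r A hA hd
    obtain ⟨P, d, hP, h⟩ := exists_diag (A.map (fun z : ℤ => (z : ℚ)))
      (by rw [IsSymm, ← transpose_map, hA.eq])
    refine ⟨P, d, hP, ?_, h⟩
    have := congrArg det h
    rw [det_mul, det_mul, det_transpose, map_det, det_diagonal] at this
    have h0 : ∏ i, d i ≠ 0 := by
      rw [← this]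
      exact mul_ne_zero (mul_ne_zero hP (by exact_mod_cast hd)) hP
    exact fun i => Finset.prod_ne_zero_iff.1 h0 i (Finset.mem_univ i)
  obtain ⟨P, d, hPd, hd, hP⟩ := ed G hGsymm hGuni.ne_zero
  obtain ⟨Q, g, hQd, hg, hQ⟩ := ed M hMsymm hMnd
  obtain ⟨sG1, sG2⟩ := sig_of_diag G hGsymm P hPd d hP
  obtain ⟨sM1, sM2⟩ := sig_of_diag M hMsymm Q hQd g hQ
  have hcl := milnor G hGsymm hGuni P d hd hP
  rw [← sG1, ← sG2, hGsp, hGsm] at hcl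
  have h8 := dvd_eight G hGsymm hGeven hGuni P d hd hP lp lm hcl
  have hm : tp + tm = m := by
    rw [← hMsp, ← hMsm, sM1, sM2, Fintype.card_subtype, Fintype.card_subtype, Finset.card_filter,
      Finset.card_filter, ← Finset.sum_add_distrib]
    have : ∀ i, ((if 0 < g i then 1 else 0) + (if g i < 0 then 1 else 0) : ℕ) = 1 := by
      intro i
      rcases lt_or_gt_of_ne (hg i) with h | h
      · simp [h, h.le, not_lt.2 h.le]
      · simp [h, h.le, not_lt.2 h.le]
    simp [this]
  rcases le_total lm lp with hle | hle
  · obtain ⟨k, hk⟩ : ∃ k : ℕ, lp = lm + 8 * k := by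
      obtain ⟨j, hj⟩ := h8
      exact ⟨j.toNat, by omega⟩
    refine final_step M G hMsymm hMeven hGsymm hGeven hGuni P d hd hP Q hQd g hg hQ 1 (Or.inl rfl)
      (lm + 4 * k - 1 - m) k ?_ ?_
    · have : Fintype.card {i // 0 < ((1 : ℤ) : ℚ) * g i} = tp := by
        rw [← hMsp, sM1]
        simp
      rw [this]
      omega
    · have : m + (lm + 4 * k - 1 - m) + 1 = lm + 4 * k := by omega
      rw [hcl, this, hk]
      push_cast
      module
  · obtain ⟨k, hk⟩ : ∃ k : ℕ, lm = lp + 8 * k := by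
      obtain ⟨j, hj⟩ := h8
      exact ⟨(-j).toNat, by omega⟩
    refine final_step M G hMsymm hMeven hGsymm hGeven hGuni P d hd hP Q hQd g hg hQ (-1) (Or.inr rfl)
      (lp + 4 * k - 1 - m) k ?_ ?_
    · have : Fintype.card {i // 0 < ((-1 : ℤ) : ℚ) * g i} = tm := by
        rw [← hMsm, sM2]
        simp
      rw [this]
      omega
    · have : m + (lp + 4 * k - 1 - m) + 1 = lp + 4 * k := by omega
      rw [hcl, this, hk]
      push_cast
      module

/-- Existence part of Nikulin's embedding theorem (simplified form):
an even nondegenerate lattice of signature `(t₊,t₋)` embeds primitively into any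
even unimodular lattice of signature `(l₊,l₋)` with `l₊ > t₊`, `l₋ > t₋`, and
`l₊ + l₋ − 2t₊ − 2t₋ ≥ 2`. -/
theorem nikulin_simplified_existence {m n : ℕ} (tp tm lp lm : ℕ)
    (M : Matrix (Fin m) (Fin m) ℤ) (G : Matrix (Fin n) (Fin n) ℤ)
    (hMsymm : M.IsSymm) (hMeven : ∀ i, 2 ∣ M i i) (hMnd : M.det ≠ 0)
    (hMsp : sigPlus M = tp) (hMsm : sigMinus M = tm)
    (hGsymm : G.IsSymm) (hGeven : ∀ i, 2 ∣ G i i) (hGuni : IsUnit G.det)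
    (hGsp : sigPlus G = lp) (hGsm : sigMinus G = lm)
    (h1 : tp < lp) (h2 : tm < lm)
    (h3 : 2 * tp + 2 * tm + 2 ≤ lp + lm) :
    ∃ T : Matrix (Fin n) (Fin m) ℤ, IsPrimitiveLatticeEmbedding M G T := by
  exact main_final tp tm lp lm M G hMsymm hMeven hMnd hMsp hMsm hGsymm hGeven hGuni hGsp hGsm h1 h2 h3
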